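/- arXiv:1312.1855 — 9 statements merged into one kernel-verified Lean document; each statement's English description precedes it below -/
import Mathlib

section
/- There exists an injective group homomorphism from the group QAut(T_{2,c}) of quasi-automorphisms of the infinite binary 2-edge-colored tree into Thompson's group V; concretely, there is an injective group homomorphism φ from QAut(T_{2,c}) into the permutation group of the Cantor set C = ℕ → Bool such that for every τ ∈ QAut(T_{2,c}), the permutation φ(τ) is a prefix replacement map. -/
/-!
The homomorphism comes from letting the tree live inside the Cantor set. A word `w` is encoded by
`enc w`, which replaces each letter `x` by `1x`, and the vertex `w` of the tree is represented by
the cone of all points `enc(w) 0 ζ`. These cones are pairwise disjoint, and they cover everything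
except the points that encode an infinite word, i.e. an end of the tree. Given `τ ∈ QAut`, let
`φ(τ)` send `enc(w) 0 ζ` to `enc(τ w) 0 ζ` for every vertex `w`, and `enc(w) ζ` to `enc(τ w) ζ` for
all but finitely many `w`. These requirements (`Represents`) determine `φ(τ)` and are stable under
composition, so `φ` is a homomorphism; it is injective since distinct vertices have disjoint cones.

Existence: if every bad vertex of `τ` has length `< N`, then `τ (u ++ v) = τ u ++ v` whenever
`|u| = N`. Every point is uniquely `enc(w) ζ` with `|w| = N`, or `enc(w) 0 ζ` with `|w| < N`
(the function `dec N` finds this decomposition), and replacing `enc(w)` by `enc(τ w)` is the map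
wanted. So `φ(τ)` replaces the prefixes in the family `code N id`, whose cones partition the Cantor
set, by those in `code N τ`; as `φ(τ)` is a bijection, the latter cones form a partition too.
-/

/-- The Cantor set `C = ℕ → Bool`. -/
abbrev Cantor : Type := ℕ → Bool

/-- Prepend a finite word `a` to an element `ξ` of the Cantor set. -/
def prepend (a : List Bool) (ξ : Cantor) : Cantor :=
  fun n => if h : n < a.length then a.get ⟨n, h⟩ else ξ (n - a.length)

/-- A finite set of finite binary words is a complete antichain if distinct elements
are incomparable in the prefix order and every `ξ : ℕ → Bool` has an initial segment
lying in it. -/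
def IsCompleteAntichain (A : Set (List Bool)) : Prop :=
  A.Finite ∧
  (∀ a ∈ A, ∀ b ∈ A, a ≠ b → ¬ a <+: b) ∧
  (∀ ξ : Cantor, ∃ n : ℕ, (List.ofFn fun i : Fin n => ξ i) ∈ A)

/-- A permutation of the Cantor set is a prefix replacement map if it is given by
a bijection between two finite complete antichains of prefixes. -/
def IsPrefixReplacement (g : Equiv.Perm Cantor) : Prop :=
  ∃ A B : Set (List Bool), IsCompleteAntichain A ∧ IsCompleteAntichain B ∧
    ∃ σ : A ≃ B, ∀ (a : A) (ξ : Cantor), g (prepend a ξ) = prepend (σ a : List Bool) ξ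

/-- The set of vertices of the tree at which `τ` fails to respect the
(colored) edge relations. -/
def qautBad (τ : Equiv.Perm (List Bool)) : Set (List Bool) :=
  {w | ∃ x : Bool, τ (w ++ [x]) ≠ (τ w) ++ [x]}

/-- The group `QAut(T_{2,c})` of quasi-automorphisms of the 2-edge-colored infinite
binary tree: permutations of the vertices respecting the edge and color relations
except at finitely many places. -/
def QAut : Subgroup (Equiv.Perm (List Bool)) where
  carrier := {τ | (qautBad τ).Finite}
  one_mem' := by
    have h : qautBad (1 : Equiv.Perm (List Bool)) = ∅ := by
      ext w; simp [qautBad]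
    simp only [Set.mem_setOf_eq, h]
    exact Set.finite_empty
  mul_mem' := by
    intro a b ha hb
    refine Set.Finite.subset (Set.Finite.union hb
      (Set.Finite.preimage b.injective.injOn ha)) ?_
    intro w hw
    obtain ⟨x, hx⟩ := hw
    by_cases h1 : w ∈ qautBad b
    · exact Or.inl h1
    · right
      simp only [Set.mem_preimage]
      simp only [qautBad, Set.mem_setOf_eq, not_exists, not_not] at h1
      refine ⟨x, fun hc => hx ?_⟩
      simp only [Equiv.Perm.coe_mul, Function.comp_apply]
      rw [h1 x, hc]
  inv_mem' := by
    intro a ha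
    refine Set.Finite.subset (ha.image a) ?_
    intro w hw
    by_contra hcon
    obtain ⟨x, hx⟩ := hw
    apply hx
    have hu : (a⁻¹ : Equiv.Perm (List Bool)) w ∉ qautBad a := by
      intro h
      exact hcon ⟨(a⁻¹ : Equiv.Perm (List Bool)) w, h, by simp⟩
    simp only [qautBad, Set.mem_setOf_eq, not_exists, not_not] at hu
    have h1 : a ((a⁻¹ : Equiv.Perm (List Bool)) w ++ [x]) = w ++ [x] := by
      rw [hu x]; simp
    calc (a⁻¹ : Equiv.Perm (List Bool)) (w ++ [x])
        = (a⁻¹ : Equiv.Perm (List Bool)) (a ((a⁻¹ : Equiv.Perm (List Bool)) w ++ [x])) := by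
          rw [h1]
      _ = (a⁻¹ : Equiv.Perm (List Bool)) w ++ [x] := by simp

/-! ### Prefixes and cones -/

lemma prepend_nil (ξ : Cantor) : prepend [] ξ = ξ := by
  funext n; simp [prepend]

lemma prepend_cons_zero (x : Bool) (a : List Bool) (ξ : Cantor) :
    prepend (x :: a) ξ 0 = x := by
  simp [prepend]

lemma prepend_cons_succ (x : Bool) (a : List Bool) (ξ : Cantor) (n : ℕ) :
    prepend (x :: a) ξ (n + 1) = prepend a ξ n := by
  simp [prepend]

lemma prepend_append (a b : List Bool) (ξ : Cantor) :
    prepend (a ++ b) ξ = prepend a (prepend b ξ) := by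
  induction a with
  | nil => simp [prepend_nil]
  | cons x a ih =>
    funext n
    cases n with
    | zero => simp [prepend_cons_zero]
    | succ n => simp [prepend_cons_succ, ih]

lemma ofFn_prepend (a : List Bool) (ξ : Cantor) :
    (List.ofFn fun i : Fin a.length => prepend a ξ i) = a := by
  apply List.ext_getElem
  · simp
  · intro i h1 h2
    simp [prepend]

lemma prepend_head (x : Cantor) (b : Bool) (h : x 0 = b) :
    prepend [b] (fun n => x (n + 1)) = x := by
  funext n
  cases n with
  | zero => simp [prepend_cons_zero, h]
  | succ n => simp [prepend_cons_succ, prepend_nil]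

/-- The cones of the words `c i` partition the Cantor set. -/
def IsConePartition {ι : Type} (c : ι → List Bool) : Prop :=
  (∀ x : Cantor, ∃ i ζ, x = prepend (c i) ζ) ∧
  ∀ i j ξ ζ, prepend (c i) ξ = prepend (c j) ζ → i = j

lemma IsConePartition.injective {ι : Type} {c : ι → List Bool} (h : IsConePartition c) :
    Function.Injective c := fun i j hij =>
  h.2 i j (fun _ => false) (fun _ => false) (by rw [hij])

lemma IsConePartition.isCompleteAntichain {ι : Type} [Finite ι] {c : ι → List Bool}
    (h : IsConePartition c) : IsCompleteAntichain (Set.range c) := by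
  refine ⟨Set.finite_range c, ?_, ?_⟩
  · rintro _ ⟨i, rfl⟩ _ ⟨j, rfl⟩ hne ⟨u, hu⟩
    apply hne
    rw [h.2 i j (prepend u fun _ => false) (fun _ => false) (by rw [← hu, prepend_append])]
  · intro ξ
    obtain ⟨i, ζ, rfl⟩ := h.1 ξ
    exact ⟨(c i).length, i, (ofFn_prepend _ _).symm⟩

/-- A permutation that replaces the prefixes in one finite cone partition is a prefix replacement
map: bijectivity makes the cones of the new prefixes a partition as well. -/
lemma IsConePartition.isPrefixReplacement {ι : Type} [Finite ι] {c s : ι → List Bool}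
    (hc : IsConePartition c) (g : Equiv.Perm Cantor)
    (hg : ∀ i ξ, g (prepend (c i) ξ) = prepend (s i) ξ) : IsPrefixReplacement g := by
  have hs : IsConePartition s := by
    constructor
    · intro x
      obtain ⟨i, ζ, h⟩ := hc.1 (g.symm x)
      exact ⟨i, ζ, by rw [← hg, ← h, Equiv.apply_symm_apply]⟩
    · intro i j ξ ζ h
      rw [← hg, ← hg] at h
      exact hc.2 i j ξ ζ (g.injective h)
  refine ⟨_, _, hc.isCompleteAntichain, hs.isCompleteAntichain,
    (Equiv.ofInjective c hc.injective).symm.trans (Equiv.ofInjective s hs.injective), ?_⟩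
  rintro ⟨_, i, rfl⟩ ξ
  have : (Equiv.ofInjective c hc.injective).symm ⟨c i, i, rfl⟩ = i :=
    Equiv.ofInjective_symm_apply hc.injective i
  simp only [Equiv.trans_apply, this, Equiv.ofInjective_apply, hg]

/-! ### Encoding words and decoding points -/

/-- The encoding of a word: each letter `x` becomes the block `1x`. -/
def enc (w : List Bool) : List Bool := w.flatMap fun x => [true, x]

lemma enc_cons (x : Bool) (w : List Bool) : enc (x :: w) = true :: x :: enc w := by
  simp [enc]

lemma enc_append (u v : List Bool) : enc (u ++ v) = enc u ++ enc v := by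
  simp [enc]

/-- Read off at most `N` blocks `1x` from the point `x`, stopping at the first block that starts
with `0`; return the word read and the rest of the point. -/
def dec : ℕ → Cantor → List Bool × Cantor
  | 0, x => ([], x)
  | N + 1, x =>
    if x 0 then (x 1 :: (dec N fun n => x (n + 2)).1, (dec N fun n => x (n + 2)).2) else ([], x)

lemma dec_cons (N : ℕ) (x : Bool) (a : List Bool) (ξ : Cantor) :
    dec (N + 1) (prepend (true :: x :: a) ξ) =
      (x :: (dec N (prepend a ξ)).1, (dec N (prepend a ξ)).2) := by
  have h1 : prepend (true :: x :: a) ξ 1 = x := by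
    rw [prepend_cons_succ _ _ _ 0, prepend_cons_zero]
  simp [dec, prepend_cons_zero, h1, prepend_cons_succ]

lemma dec_stop (N : ℕ) (w : List Bool) (hw : w.length ≤ N) (ζ : Cantor) :
    dec N (prepend (enc w ++ [false]) ζ) = (w, prepend [false] ζ) := by
  induction w generalizing N with
  | nil => cases N <;> simp [dec, enc, prepend_cons_zero]
  | cons x w ih =>
    obtain _ | N := N
    · simp at hw
    · rw [enc_cons, List.cons_append, List.cons_append, dec_cons, ih N (by simpa using hw)]

lemma dec_enc (N : ℕ) (w : List Bool) (hw : w.length = N) (ζ : Cantor) :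
    dec N (prepend (enc w) ζ) = (w, ζ) := by
  induction w generalizing N with
  | nil => subst hw; simp [dec, enc, prepend_nil]
  | cons x w ih =>
    subst hw
    rw [enc_cons, List.length_cons, dec_cons, ih _ rfl]

lemma prepend_dec (N : ℕ) (x : Cantor) : prepend (enc (dec N x).1) (dec N x).2 = x := by
  induction N generalizing x with
  | zero => simp [dec, enc, prepend_nil]
  | succ N ih =>
    by_cases h : x 0
    · simp only [dec, h, if_true, enc_cons]
      funext n
      match n with
      | 0 => simp [prepend_cons_zero, h]
      | 1 => rw [prepend_cons_succ _ _ _ 0, prepend_cons_zero]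
      | n + 2 => rw [prepend_cons_succ, prepend_cons_succ, ih]
    · simp [dec, h, enc, prepend_nil]

lemma dec_spec (N : ℕ) (x : Cantor) :
    (dec N x).1.length = N ∨ ((dec N x).1.length < N ∧ (dec N x).2 0 = false) := by
  induction N generalizing x with
  | zero => simp [dec]
  | succ N ih =>
    by_cases h : x 0
    · simpa [dec, h] using ih _
    · right; simp at h; simp [dec, h]

/-- The prefix attached to a word `w` of length at most `N`: the whole cone of `enc (τ w)` when
`w` has length `N`, and only the part representing the vertex `τ w` when `w` is shorter. -/
def code (N : ℕ) (τ : List Bool → List Bool) (w : {w : List Bool // w.length ≤ N}) : List Bool :=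
  if w.1.length = N then enc (τ w.1) else enc (τ w.1) ++ [false]

lemma isConePartition_code (N : ℕ) : IsConePartition (code N id) := by
  constructor
  · intro x
    have hx := prepend_dec N x
    rcases dec_spec N x with h | ⟨h, h0⟩
    · exact ⟨⟨_, h.le⟩, _, by simpa [code, h] using hx.symm⟩
    · refine ⟨⟨_, h.le⟩, fun n => (dec N x).2 (n + 1), ?_⟩
      simp only [code, h.ne, if_false, id, prepend_append]
      rw [prepend_head _ _ h0, hx]
  · have key : ∀ i ξ, (dec N (prepend (code N id i) ξ)).1 = i.1 := by
      intro i ξ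
      unfold code
      split_ifs with h
      · simp [dec_enc N i.1 h]
      · simp [dec_stop N i.1 i.2]
    intro i j ξ ζ h
    apply Subtype.ext
    rw [← key i ξ, ← key j ζ, h]

/-! ### The action on the Cantor set -/

/-- The map `f` represents the map `τ` of vertices: it carries the cone of each vertex `w` to that
of `τ w`, and for almost all `w` the whole cone of `enc w` to that of `enc (τ w)`. -/
def Represents (τ : List Bool → List Bool) (f : Cantor → Cantor) : Prop :=
  (∀ w ζ, f (prepend (enc w ++ [false]) ζ) = prepend (enc (τ w) ++ [false]) ζ) ∧
  ∃ F : Set (List Bool), F.Finite ∧ ∀ w ∉ F, ∀ ζ, f (prepend (enc w) ζ) = prepend (enc (τ w)) ζ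

lemma exists_length_lt {F : Set (List Bool)} (hF : F.Finite) : ∃ N, ∀ w ∈ F, w.length < N := by
  obtain ⟨N, hN⟩ := (hF.image List.length).bddAbove
  exact ⟨N + 1, fun w hw => Nat.lt_succ_of_le (hN ⟨w, hw, rfl⟩)⟩

lemma Represents.exists_code {τ : List Bool → List Bool} {f : Cantor → Cantor}
    (h : Represents τ f) :
    ∃ N, ∀ M, N ≤ M → ∀ i ξ, f (prepend (code M id i) ξ) = prepend (code M τ i) ξ := by
  obtain ⟨h1, F, hF, h2⟩ := h
  obtain ⟨N, hN⟩ := exists_length_lt hF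
  refine ⟨N, fun M hM i ξ => ?_⟩
  unfold code
  split_ifs with hi
  · refine h2 _ (fun hmem => ?_) ξ
    have := hN _ hmem
    simp only [id] at this
    omega
  · exact h1 _ _

lemma Represents.unique {τ : List Bool → List Bool} {f g : Cantor → Cantor}
    (hf : Represents τ f) (hg : Represents τ g) : f = g := by
  obtain ⟨M, hM⟩ := hf.exists_code
  obtain ⟨N, hN⟩ := hg.exists_code
  funext x
  obtain ⟨i, ζ, rfl⟩ := (isConePartition_code (max M N)).1 x
  rw [hM _ (le_max_left _ _), hN _ (le_max_right _ _)]

lemma Represents.id : Represents id id :=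
  ⟨fun _ _ => rfl, ∅, Set.finite_empty, fun _ _ _ => rfl⟩

lemma Represents.comp {τ σ : List Bool → List Bool} {f g : Cantor → Cantor}
    (hf : Represents τ f) (hg : Represents σ g) (hσ : Function.Injective σ) :
    Represents (τ ∘ σ) (f ∘ g) := by
  obtain ⟨hf1, F, hF, hf2⟩ := hf
  obtain ⟨hg1, G, hG, hg2⟩ := hg
  refine ⟨fun w ζ => by simp [hg1, hf1], G ∪ σ ⁻¹' F, hG.union (hF.preimage hσ.injOn), ?_⟩
  intro w hw ζ
  simp only [Set.mem_union, Set.mem_preimage, not_or] at hw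
  simp [hg2 w hw.1, hf2 _ hw.2]

lemma Represents.inj {τ σ : List Bool → List Bool} {f : Cantor → Cantor}
    (hτ : Represents τ f) (hσ : Represents σ f) : τ = σ := by
  funext w
  have h := (hτ.1 w fun _ => false).symm.trans (hσ.1 w fun _ => false)
  have h' := congrArg (fun x => (dec (max (τ w).length (σ w).length) x).1) h
  simpa [dec_stop] using h'

lemma apply_append_of_bad_lt {τ : Equiv.Perm (List Bool)} {N : ℕ}
    (hN : ∀ w ∈ qautBad τ, w.length < N) (u v : List Bool) (hu : N ≤ u.length) :
    τ (u ++ v) = τ u ++ v := by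
  induction v using List.reverseRecOn with
  | nil => simp
  | append_singleton v x ih =>
    have hgood : u ++ v ∉ qautBad τ := fun hbad => by
      have := hN _ hbad
      rw [List.length_append] at this
      omega
    simp only [qautBad, Set.mem_ofPred_eq, not_exists, not_not] at hgood
    rw [← List.append_assoc, hgood x, ih, List.append_assoc]

lemma exists_represents (τ : QAut) : ∃ f, Represents τ.1 f := by
  obtain ⟨N, hN⟩ := exists_length_lt (show (qautBad τ.1).Finite from τ.2)
  have key : ∀ w, N ≤ w.length → ∀ ζ,
      prepend (enc (τ.1 (dec N (prepend (enc w) ζ)).1)) (dec N (prepend (enc w) ζ)).2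
        = prepend (enc (τ.1 w)) ζ := by
    intro w hw ζ
    have hl : (w.take N).length = N := by simp [hw]
    have hτ := apply_append_of_bad_lt hN (w.take N) (w.drop N) hl.ge
    have hd := dec_enc N (w.take N) hl (prepend (enc (w.drop N)) ζ)
    rw [← prepend_append, ← enc_append, List.take_append_drop] at hd
    rw [List.take_append_drop] at hτ
    rw [hd, hτ, enc_append, prepend_append]
  refine ⟨fun x => prepend (enc (τ.1 (dec N x).1)) (dec N x).2, ?_,
    {w | w.length < N}, List.finite_length_lt Bool N, ?_⟩
  · intro w ζ
    by_cases hw : w.length ≤ N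
    · simp only [dec_stop N w hw]
      rw [← prepend_append]
    · simpa only [prepend_append] using key w (by omega) (prepend [false] ζ)
  · intro w hw ζ
    exact key w (by simpa using hw) ζ

/-- The action of `QAut` on the Cantor set, as a homomorphism to the monoid of self-maps. -/
noncomputable def cantorEnd : QAut →* Function.End Cantor where
  toFun τ := (exists_represents τ).choose
  map_one' := (exists_represents 1).choose_spec.unique Represents.id
  map_mul' τ σ := (exists_represents (τ * σ)).choose_spec.unique
    ((exists_represents τ).choose_spec.comp (exists_represents σ).choose_spec σ.1.injective)

lemma cantorEnd_represents (τ : QAut) : Represents τ.1 (cantorEnd τ) :=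
  (exists_represents τ).choose_spec

/-- There is an injective group homomorphism from `QAut(T_{2,c})` into Thompson's
group `V`: an injective homomorphism into the permutation group of the Cantor set
all of whose values are prefix replacement maps. -/
theorem qaut_embeds_in_V :
    ∃ φ : QAut →* Equiv.Perm Cantor,
      Function.Injective φ ∧ ∀ τ : QAut, IsPrefixReplacement (φ τ) := by
  have hrep : ∀ τ : QAut, Represents τ.1 (cantorEnd.toHomPerm τ) := cantorEnd_represents
  refine ⟨cantorEnd.toHomPerm, ?_, ?_⟩
  · intro τ σ h
    have h2 := hrep σ
    rw [← h] at h2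
    exact Subtype.ext (DFunLike.coe_injective ((hrep τ).inj h2))
  · intro τ
    obtain ⟨N, hN⟩ := (hrep τ).exists_code
    have : Finite {w : List Bool // w.length ≤ N} := (List.finite_length_le Bool N).to_subtype
    exact (isConePartition_code N).isPrefixReplacement _ (hN N le_rfl)
end

section
/- There exists an injective group homomorphism from Thompson's group V (the group of prefix replacement permutations of the Cantor set C = ℕ → Bool) into the group QAut(T_{2,c}) of quasi-automorphisms of the infinite binary 2-edge-colored tree. -/
namespace VEmbedding

/-- The constantly `false` sequence `0^∞`. -/
def zeroSeq : Cantor := fun _ => false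

/-- Sequences with only finitely many entries `true`: the set `D`. -/
def EventuallyFalse (ξ : Cantor) : Prop := ∃ N, ∀ n, N ≤ n → ξ n = false

/-! ### Prepending words -/

lemma prepend_lt (a : List Bool) (ξ : Cantor) {n : ℕ} (h : n < a.length) :
    prepend a ξ n = a[n] := by
  simp [prepend, h]

lemma prepend_add (a : List Bool) (ξ : Cantor) (n : ℕ) :
    prepend a ξ (a.length + n) = ξ n := by
  simp [prepend]

lemma prepend_append (a b : List Bool) (ξ : Cantor) :
    prepend (a ++ b) ξ = prepend a (prepend b ξ) := by
  funext n
  by_cases h : n < a.length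
  · rw [prepend_lt a _ h, prepend_lt _ _ (by simp; omega), List.getElem_append_left h]
  · obtain ⟨m, rfl⟩ := Nat.exists_eq_add_of_le (not_lt.mp h)
    rw [prepend_add]
    by_cases h' : m < b.length
    · rw [prepend_lt b _ h', prepend_lt _ _ (by simp; omega),
        List.getElem_append_right (by omega)]
      simp
    · obtain ⟨k, rfl⟩ := Nat.exists_eq_add_of_le (not_lt.mp h')
      rw [prepend_add, ← add_assoc, ← List.length_append, prepend_add]

lemma prepend_congr (a : List Bool) {ξ η : Cantor} {n : ℕ} (h : ∀ m ≤ n, ξ m = η m) :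
    prepend a ξ n = prepend a η n := by
  unfold prepend
  split_ifs
  · rfl
  · exact h _ (Nat.sub_le _ _)

lemma prepend_ofFn (ξ : Cantor) (n : ℕ) :
    prepend (List.ofFn fun i : Fin n => ξ i) (fun k => ξ (n + k)) = ξ := by
  funext m
  by_cases h : m < n
  · rw [prepend_lt _ _ (by simpa using h)]; simp
  · simp only [prepend, List.length_ofFn, h, dite_false]
    congr 1; omega

lemma eventuallyFalse_prepend (a : List Bool) (ξ : Cantor) :
    EventuallyFalse (prepend a ξ) ↔ EventuallyFalse ξ := by
  constructor
  · rintro ⟨N, hN⟩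
    refine ⟨N, fun n hn => ?_⟩
    rw [← prepend_add a ξ n]
    exact hN _ (by omega)
  · rintro ⟨N, hN⟩
    refine ⟨a.length + N, fun n hn => ?_⟩
    obtain ⟨k, rfl⟩ := Nat.exists_eq_add_of_le hn
    rw [add_assoc, prepend_add]
    exact hN _ (by omega)

/-! ### Complete antichains -/

/-- Every point lies in the cone of some element of a complete antichain. -/
lemma exists_prepend {A : Set (List Bool)} (hA : IsCompleteAntichain A) (ξ : Cantor) :
    ∃ (a : A) (η : Cantor), ξ = prepend a η := by
  obtain ⟨n, hn⟩ := hA.2.2 ξ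
  exact ⟨⟨_, hn⟩, _, (prepend_ofFn ξ n).symm⟩

/-- All sufficiently long words have a prefix in a given complete antichain. -/
lemma exists_prefix_of_length_le {A : Set (List Bool)} (hA : IsCompleteAntichain A) :
    ∃ N : ℕ, ∀ w : List Bool, N ≤ w.length → ∃ (a : A) (u : List Bool), w = a ++ u := by
  obtain ⟨N, hN⟩ := (hA.1.image List.length).bddAbove
  refine ⟨N, fun w hw => ?_⟩
  obtain ⟨n, hn⟩ := hA.2.2 (prepend w zeroSeq)
  have hnN : n ≤ N := by simpa using hN (Set.mem_image_of_mem List.length hn)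
  refine ⟨⟨_, hn⟩, w.drop n, ?_⟩
  have : (List.ofFn fun i : Fin n => prepend w zeroSeq i) = w.take n := by
    apply List.ext_getElem
    · simp; omega
    · intro i h1 h2
      simp only [List.length_ofFn] at h1
      simp [prepend_lt w zeroSeq (show i < w.length by omega)]
  simp [this]

lemma eventuallyFalse_iff {g : Equiv.Perm Cantor} (hg : IsPrefixReplacement g) (ξ : Cantor) :
    EventuallyFalse (g ξ) ↔ EventuallyFalse ξ := by
  obtain ⟨A, B, hA, hB, σ, hσ⟩ := hg
  obtain ⟨a, η, rfl⟩ := exists_prepend hA ξ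
  rw [hσ, eventuallyFalse_prepend, eventuallyFalse_prepend]

/-! ### Encoding eventually-`false` sequences by words -/

/-- The point `w 1 0^∞`. -/
def pt (w : List Bool) : Cantor := prepend w (prepend [true] zeroSeq)

lemma pt_append (a u : List Bool) : pt (a ++ u) = prepend a (pt u) := prepend_append _ _ _

lemma pt_length (w : List Bool) : pt w w.length = true := by
  simp [pt, prepend]

lemma pt_gt (w : List Bool) {n : ℕ} (h : w.length < n) : pt w n = false := by
  obtain ⟨k, rfl⟩ := Nat.exists_eq_add_of_lt h
  rw [pt, add_assoc, prepend_add]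
  simp [prepend, zeroSeq]

lemma eventuallyFalse_pt (w : List Bool) : EventuallyFalse (pt w) :=
  ⟨w.length + 1, fun _ hn => pt_gt w hn⟩

lemma pt_ne_zeroSeq (w : List Bool) : pt w ≠ zeroSeq := by
  intro h
  have := congrFun h w.length
  rw [pt_length] at this
  simp [zeroSeq] at this

/-- The length of `w` is recovered from `w 1 0^∞` as the position of the last `true`. -/
lemma pt_injective : Function.Injective pt := by
  intro v w h
  have hl : v.length = w.length := by
    rcases lt_trichotomy v.length w.length with hlt | heq | hlt
    · have := congrFun h w.length
      rw [pt_length, pt_gt v hlt] at this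
      simp at this
    · exact heq
    · have := congrFun h v.length
      rw [pt_length, pt_gt w hlt] at this
      simp at this
  refine List.ext_getElem hl fun i h1 h2 => ?_
  have := congrFun h i
  rwa [pt, pt, prepend_lt _ _ h1, prepend_lt _ _ h2] at this

lemma eq_zeroSeq_or_pt {ξ : Cantor} (h : EventuallyFalse ξ) : ξ = zeroSeq ∨ ∃ w, ξ = pt w := by
  obtain ⟨N, hN⟩ := h
  induction N with
  | zero => exact Or.inl (funext fun n => hN n (Nat.zero_le n))
  | succ N ih =>
    by_cases hx : ξ N = true
    · right
      refine ⟨List.ofFn fun i : Fin N => ξ i, ?_⟩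
      rw [pt]
      conv_lhs => rw [← prepend_ofFn ξ N]
      congr 1
      funext k
      rcases k with _ | k
      · simpa [prepend] using hx
      · simpa [prepend, zeroSeq] using hN _ (by omega)
    · refine ih fun n hn => ?_
      rcases hn.eq_or_lt with rfl | hlt
      · simpa using hx
      · exact hN n hlt

/-- The identification of words with `D ⊔ {words}`: the root encodes `0^∞`, the cone at `true`
encodes the other points `w 1 0^∞` of `D`, and the cone at `false` is the second summand. -/
def wordEnc : List Bool → {ξ : Cantor // EventuallyFalse ξ} ⊕ List Bool
  | [] => Sum.inl ⟨zeroSeq, 0, fun _ _ => rfl⟩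
  | true :: w => Sum.inl ⟨pt w, eventuallyFalse_pt w⟩
  | false :: w => Sum.inr w

lemma wordEnc_bijective : Function.Bijective wordEnc := by
  constructor
  · rintro (_ | ⟨_ | _, v⟩) (_ | ⟨_ | _, w⟩) h <;>
      simp only [wordEnc, Sum.inl.injEq, Sum.inr.injEq, Subtype.mk.injEq, reduceCtorEq] at h ⊢
    · exact absurd (congrArg Subtype.val h.symm) (pt_ne_zeroSeq w)
    · rw [h]
    · exact absurd (congrArg Subtype.val h) (pt_ne_zeroSeq v)
    · rw [pt_injective h]
  · rintro (⟨ξ, hξ⟩ | w)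
    · rcases eq_zeroSeq_or_pt hξ with rfl | ⟨w, rfl⟩
      · exact ⟨[], rfl⟩
      · exact ⟨true :: w, rfl⟩
    · exact ⟨false :: w, rfl⟩

/-- `wordEnc` as an equivalence. -/
noncomputable def wordEquiv : List Bool ≃ {ξ : Cantor // EventuallyFalse ξ} ⊕ List Bool :=
  Equiv.ofBijective wordEnc wordEnc_bijective

/-! ### The induced action on words -/

/-- The permutation of words induced by a permutation `g` of `C` preserving `D`: it acts as `g` on
the words encoding points of `D` and fixes the words starting with `false`. -/
noncomputable def wordPerm (g : Equiv.Perm Cantor)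
    (hg : ∀ ξ, EventuallyFalse (g ξ) ↔ EventuallyFalse ξ) : Equiv.Perm (List Bool) :=
  wordEquiv.symm.permCongr (Equiv.sumCongr (g.subtypePerm hg) (Equiv.refl _))

lemma wordEnc_wordPerm (g : Equiv.Perm Cantor)
    (hg : ∀ ξ, EventuallyFalse (g ξ) ↔ EventuallyFalse ξ) (w : List Bool) :
    wordEnc (wordPerm g hg w) = Sum.map (g.subtypePerm hg) id (wordEnc w) := by
  change wordEquiv (wordPerm g hg w) = Sum.map (g.subtypePerm hg) id (wordEquiv w)
  simp [wordPerm, Equiv.permCongr_apply]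

lemma wordPerm_mul (g h : Equiv.Perm Cantor)
    (hg : ∀ ξ, EventuallyFalse (g ξ) ↔ EventuallyFalse ξ)
    (hh : ∀ ξ, EventuallyFalse (h ξ) ↔ EventuallyFalse ξ)
    (hgh : ∀ ξ, EventuallyFalse ((g * h) ξ) ↔ EventuallyFalse ξ) :
    wordPerm (g * h) hgh = wordPerm g hg * wordPerm h hh := by
  ext1 w
  apply wordEnc_bijective.1
  rw [Equiv.Perm.mul_apply, wordEnc_wordPerm, wordEnc_wordPerm, wordEnc_wordPerm]
  rcases wordEnc w with ξ | w <;> rfl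

lemma wordPerm_false (g : Equiv.Perm Cantor)
    (hg : ∀ ξ, EventuallyFalse (g ξ) ↔ EventuallyFalse ξ) (w : List Bool) :
    wordPerm g hg (false :: w) = false :: w :=
  wordEnc_bijective.1 (wordEnc_wordPerm g hg _)

lemma wordPerm_true (g : Equiv.Perm Cantor)
    (hg : ∀ ξ, EventuallyFalse (g ξ) ↔ EventuallyFalse ξ) {v w : List Bool}
    (h : g (pt v) = pt w) : wordPerm g hg (true :: v) = true :: w := by
  apply wordEnc_bijective.1
  rw [wordEnc_wordPerm]
  simp [wordEnc, h]

lemma qaut_mem {g : Equiv.Perm Cantor} (hg : IsPrefixReplacement g) :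
    wordPerm g (eventuallyFalse_iff hg) ∈ QAut := by
  have hD := eventuallyFalse_iff hg
  obtain ⟨A, B, hA, hB, σ, hσ⟩ := id hg
  obtain ⟨N, hN⟩ := exists_prefix_of_length_le hA
  refine (List.finite_length_le Bool N).subset ?_
  rintro w ⟨x, hx⟩
  by_contra hw
  simp only [Set.mem_ofPred_eq, not_le] at hw
  apply hx
  rcases w with _ | ⟨_ | _, w⟩
  · simp at hw
  · rw [List.cons_append, wordPerm_false, wordPerm_false, List.cons_append]
  · obtain ⟨a, u, rfl⟩ := hN w (by simpa [Nat.lt_succ_iff] using hw)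
    have key : ∀ u, wordPerm g hD (true :: (a ++ u)) = true :: (σ a ++ u) := fun u =>
      wordPerm_true g hD (by rw [pt_append, hσ, pt_append])
    rw [List.cons_append, List.append_assoc, key, key]
    simp

/-- An element of `V` fixing `D` pointwise is trivial: the tail of any point can be truncated to
give a point of `D` with any prescribed number of coordinates unchanged. -/
lemma eq_one_of_fix {g : Equiv.Perm Cantor} (hg : IsPrefixReplacement g)
    (h : ∀ ξ, EventuallyFalse ξ → g ξ = ξ) : g = 1 := by
  obtain ⟨A, B, hA, hB, σ, hσ⟩ := hg
  ext1 ξ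
  obtain ⟨a, η, rfl⟩ := exists_prepend hA ξ
  funext n
  let η' : Cantor := fun m => if m ≤ n then η m else false
  have hη : ∀ m ≤ n, η m = η' m := fun m hm => by simp [η', hm]
  have hfix := h (prepend a η') ((eventuallyFalse_prepend _ _).2
    ⟨n + 1, fun m hm => by simp [η', Nat.not_le.2 hm]⟩)
  rw [hσ] at hfix ⊢
  rw [prepend_congr _ hη, hfix, Equiv.Perm.one_apply, prepend_congr _ hη]

end VEmbedding

open VEmbedding in
/-- Thompson's group `V` (the group of prefix replacement permutations of the
Cantor set) embeds into `QAut(T_{2,c})`. -/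
theorem V_embeds_in_qaut (V : Subgroup (Equiv.Perm Cantor))
    (hV : ∀ g : Equiv.Perm Cantor, g ∈ V ↔ IsPrefixReplacement g) :
    ∃ φ : V →* QAut, Function.Injective φ := by
  have hP : ∀ g : V, IsPrefixReplacement (g : Equiv.Perm Cantor) := fun g => (hV g).1 g.2
  refine ⟨MonoidHom.mk' (fun g => ⟨wordPerm g (eventuallyFalse_iff (hP g)), qaut_mem (hP g)⟩)
    fun g h => Subtype.ext (wordPerm_mul _ _ _ _ _), ?_⟩
  rw [injective_iff_map_eq_one]
  intro g hg
  have hg' : wordPerm g (eventuallyFalse_iff (hP g)) = 1 := congrArg Subtype.val hg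
  refine Subtype.ext (eq_one_of_fix (hP g) fun ξ hξ => ?_)
  obtain ⟨w, hw⟩ := wordEnc_bijective.2 (Sum.inl ⟨ξ, hξ⟩)
  have := wordEnc_wordPerm g (eventuallyFalse_iff (hP g)) w
  rw [hg', Equiv.Perm.one_apply, hw] at this
  simpa using this.symm
end

section
/- Let m, n be nonzero integers with |m| ≠ |n|. Then the Baumslag–Solitar group BS(m,n) does not embed in Thompson's group V: every group homomorphism from BS(m,n) to the permutation group of the Cantor set C = ℕ → Bool whose image consists of prefix replacement maps fails to be injective. -/
/-- The single Baumslag–Solitar relator `b⁻¹ aᵐ b (aⁿ)⁻¹` in the free group on two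
generators (`0 ↦ a`, `1 ↦ b`). -/
def bsRels (m n : ℤ) : Set (FreeGroup (Fin 2)) :=
  {(FreeGroup.of 1)⁻¹ * (FreeGroup.of 0) ^ m * FreeGroup.of 1 * ((FreeGroup.of 0) ^ n)⁻¹}

/-- The Baumslag–Solitar group `BS(m,n) = ⟨a, b ∣ b⁻¹ aᵐ b = aⁿ⟩`. -/
abbrev BS (m n : ℤ) : Type := PresentedGroup (bsRels m n)

/-- The generator `a` of `BS(m,n)`. -/
def BS.a (m n : ℤ) : BS m n := PresentedGroup.of 0

/-- The generator `b` of `BS(m,n)`. -/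
def BS.b (m n : ℤ) : BS m n := PresentedGroup.of 1

namespace BSV

open Filter Topology

/-! ### Words and points of the Cantor set -/

/-- The initial segment of length `n` of `x`. -/
def tk (n : ℕ) (x : Cantor) : List Bool := List.ofFn fun i : Fin n => x i

@[simp] lemma length_tk (n : ℕ) (x : Cantor) : (tk n x).length = n := by simp [tk]

lemma prepend_append (u v : List Bool) (ξ : Cantor) :
    prepend (u ++ v) ξ = prepend u (prepend v ξ) := by
  funext i
  simp only [prepend, List.length_append, List.get_eq_getElem]
  by_cases h1 : i < u.length
  · have : i < u.length + v.length := by omega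
    simp [h1, this]
  · by_cases h2 : i < u.length + v.length
    · have h3 : i - u.length < v.length := by omega
      simp [h1, h2, h3, List.getElem_append_right (not_lt.mp h1)]
    · have h3 : ¬ i - u.length < v.length := by omega
      simp [h1, h2, h3, Nat.sub_sub]

lemma prepend_tk (n : ℕ) (x : Cantor) : prepend (tk n x) (fun i => x (i + n)) = x := by
  funext i
  by_cases h : i < n
  · simp [prepend, tk, h]
  · simp only [prepend, length_tk, h, dite_false]
    congr 1
    omega

lemma tk_prepend (u : List Bool) (ξ : Cantor) : tk u.length (prepend u ξ) = u := by
  apply List.ext_getElem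
  · simp
  · intro i h1 h2
    simp [tk, prepend]

lemma tk_add (n k : ℕ) (x : Cantor) : tk (n + k) x = tk n x ++ tk k (fun i => x (i + n)) := by
  apply List.ext_getElem
  · simp
  · intro i h1 h2
    by_cases h : i < n
    · simp [tk, h]
    · rw [List.getElem_append_right (by simpa using h)]
      simp only [tk, List.getElem_ofFn, List.length_ofFn]
      congr 1
      omega

lemma prepend_injective_left {v w : List Bool} (h : ∀ ξ, prepend v ξ = prepend w ξ) : v = w := by
  have key : ∀ {v w : List Bool}, (∀ ξ, prepend v ξ = prepend w ξ) → ¬ v.length < w.length := by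
    intro v w h hl
    have h1 := congrFun (h fun i => decide (i = 0)) w.length
    have h2 : ¬ w.length < v.length := by omega
    have h3 : w.length - v.length ≠ 0 := by omega
    simp [prepend, h2, h3] at h1
  have hl : v.length = w.length :=
    le_antisymm (not_lt.mp (key fun ξ => (h ξ).symm)) (not_lt.mp (key h))
  rw [← tk_prepend v fun _ => false, ← tk_prepend w fun _ => false, hl, h]

/-! ### Prefix replacements and the logarithmic derivative -/

/-- `g` maps the cone of `u` onto the cone of `v` by replacing the prefix `u` by `v`. -/
def Acts (g : Equiv.Perm Cantor) (u v : List Bool) : Prop :=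
  ∀ ξ, g (prepend u ξ) = prepend v ξ

lemma Acts.append {g : Equiv.Perm Cantor} {u v : List Bool} (h : Acts g u v) (t : List Bool) :
    Acts g (u ++ t) (v ++ t) := fun ξ => by
  rw [prepend_append, prepend_append, h]

lemma Acts.mul {g h : Equiv.Perm Cantor} {u v w : List Bool} (hg : Acts g v w) (hh : Acts h u v) :
    Acts (g * h) u w := fun ξ => by
  rw [Equiv.Perm.mul_apply, hh, hg]

lemma Acts.unique {g : Equiv.Perm Cantor} {u v w : List Bool} (h : Acts g u v) (h' : Acts g u w) :
    v = w := prepend_injective_left fun ξ => by rw [← h, ← h']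

lemma Acts.eq_tk {g : Equiv.Perm Cantor} {n : ℕ} {x : Cantor} {v : List Bool}
    (h : Acts g (tk n x) v) : v = tk v.length (g x) := by
  conv_rhs => rw [← prepend_tk n x, h, tk_prepend]

/-- `g` acts by prefix replacement on all cones of words of length at least `L`. -/
def LinAt (g : Equiv.Perm Cantor) (L : ℕ) : Prop :=
  ∀ n, L ≤ n → ∀ x, ∃ v, Acts g (tk n x) v

/-- `g` acts by prefix replacement on the cones of all sufficiently long words. -/
def Lin (g : Equiv.Perm Cantor) : Prop := ∃ L, LinAt g L

lemma IsPrefixReplacement.lin {g : Equiv.Perm Cantor} (hg : IsPrefixReplacement g) : Lin g := by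
  obtain ⟨A, B, ⟨hfin, -, hcov⟩, -, σ, hσ⟩ := hg
  obtain ⟨L, hL⟩ := (hfin.image List.length).bddAbove
  refine ⟨L, fun n hn x => ?_⟩
  obtain ⟨k, hk⟩ := hcov x
  have hkL : k ≤ L := by simpa using hL ⟨_, hk, rfl⟩
  obtain ⟨d, rfl⟩ := Nat.exists_eq_add_of_le (hkL.trans hn)
  have h : Acts g (tk k x) (σ ⟨_, hk⟩) := fun ξ => hσ ⟨_, hk⟩ ξ
  exact ⟨_, tk_add k d x ▸ h.append _⟩

open Classical in
/-- The logarithmic derivative of `g` at `x`: the change in length of a prefix of `x` that is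
replaced by `g`. The value is `0` if `g` is not a prefix replacement near `x`. -/
noncomputable def D (g : Equiv.Perm Cantor) (x : Cantor) : ℤ :=
  if h : ∃ p : ℕ × List Bool, Acts g (tk p.1 x) p.2 then h.choose.2.length - h.choose.1 else 0

lemma D_eq {g : Equiv.Perm Cantor} {n : ℕ} {x : Cantor} {v : List Bool}
    (h : Acts g (tk n x) v) : D g x = v.length - n := by
  have key : ∀ {k l : ℕ} {v w : List Bool}, k ≤ l → Acts g (tk k x) v → Acts g (tk l x) w →
      (v.length : ℤ) - k = w.length - l := by
    intro k l v w hkl h1 h2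
    obtain ⟨d, rfl⟩ := Nat.exists_eq_add_of_le hkl
    rw [tk_add] at h2
    have := (h1.append _).unique h2
    subst this
    simp
  have hex : ∃ p : ℕ × List Bool, Acts g (tk p.1 x) p.2 := ⟨(n, v), h⟩
  rw [D, dif_pos hex]
  rcases le_total hex.choose.1 n with hl | hl
  · exact key hl hex.choose_spec h
  · exact (key hl h hex.choose_spec).symm

lemma D_one (x : Cantor) : D 1 x = 0 := by
  have h : Acts 1 (tk 0 x) (tk 0 x) := fun ξ => rfl
  rw [D_eq h]
  simp

/-- The chain rule. -/
lemma D_mul {g h : Equiv.Perm Cantor} (hg : Lin g) (hh : Lin h) (x : Cantor) :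
    D (g * h) x = D g (h x) + D h x := by
  obtain ⟨L, hL⟩ := hg
  obtain ⟨K, hK⟩ := hh
  obtain ⟨v, hv⟩ := hK K le_rfl x
  have hv' := hv.append (tk L fun i => x (i + K))
  rw [← tk_add] at hv'
  set w := v ++ tk L fun i => x (i + K) with hw
  have hwl : L ≤ w.length := by simp [hw]
  obtain ⟨z, hz⟩ := hL w.length hwl (h x)
  rw [D_eq hz, D_eq hv']
  rw [← hv'.eq_tk] at hz
  rw [D_eq (hz.mul hv')]
  ring

lemma D_inv {g : Equiv.Perm Cantor} (hg : Lin g) (hg' : Lin g⁻¹) (x : Cantor) :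
    D g⁻¹ (g x) = - D g x := by
  have := D_mul hg' hg x
  rw [inv_mul_cancel, D_one] at this
  linarith

/-- `D g x` depends only on a prefix of `x` of fixed length, so it takes finitely many values. -/
lemma D_bounded {g : Equiv.Perm Cantor} (hg : Lin g) : ∃ C : ℕ, ∀ x, |D g x| ≤ C := by
  obtain ⟨L, hL⟩ := hg
  let e : (Fin L → Bool) → Cantor := fun f i => if h : i < L then f ⟨i, h⟩ else false
  have he : ∀ x : Cantor, D g x = D g (e fun i => x i) := by
    intro x
    obtain ⟨v, hv⟩ := hL L le_rfl x
    have : tk L (e fun i => x i) = tk L x := by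
      simp [tk, e]
    rw [D_eq hv]
    rw [← this] at hv
    rw [D_eq hv]
  obtain ⟨C, hC⟩ := (Set.finite_range fun f => |D g (e f)|).bddAbove
  refine ⟨C.toNat, fun x => ?_⟩
  rw [he]
  exact (hC (Set.mem_range_self fun i : Fin L => x i)).trans (Int.self_le_toNat C)

/-- The supremum of the absolute logarithmic derivative. -/
noncomputable def M (g : Equiv.Perm Cantor) : ℝ := ⨆ x, |(D g x : ℝ)|

lemma le_M {g : Equiv.Perm Cantor} (hg : Lin g) (x : Cantor) : |(D g x : ℝ)| ≤ M g := by
  obtain ⟨C, hC⟩ := D_bounded hg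
  refine le_ciSup (f := fun x => |(D g x : ℝ)|) ⟨C, ?_⟩ x
  rintro _ ⟨y, rfl⟩
  show |(D g y : ℝ)| ≤ C
  exact_mod_cast hC y

lemma M_nonneg (g : Equiv.Perm Cantor) : 0 ≤ M g := Real.iSup_nonneg fun _ => abs_nonneg _

lemma M_mul {g h : Equiv.Perm Cantor} (hg : Lin g) (hh : Lin h) : M (g * h) ≤ M g + M h := by
  refine ciSup_le fun x => ?_
  rw [D_mul hg hh]
  push_cast
  exact (abs_add_le _ _).trans (add_le_add (le_M hg _) (le_M hh _))

lemma M_inv {g : Equiv.Perm Cantor} (hg : Lin g) (hg' : Lin g⁻¹) : M g⁻¹ = M g := by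
  have key : ∀ {g : Equiv.Perm Cantor}, Lin g → Lin g⁻¹ → M g⁻¹ ≤ M g := by
    intro g hg hg'
    refine ciSup_le fun y => ?_
    have := D_inv hg hg' (g⁻¹ y)
    rw [show g (g⁻¹ y) = y from g.apply_symm_apply y] at this
    rw [this]
    push_cast
    rw [abs_neg]
    exact le_M hg _
  refine le_antisymm (key hg hg') ?_
  have := key hg' (by simpa using hg)
  rwa [inv_inv] at this

/-! ### Powers of an element -/

/-- A prefix of `x` whose successive images under `g` all have length at least `L` is replaced by
`g ^ N`. -/
lemma track {g : Equiv.Perm Cantor} {L : ℕ} (hL : LinAt g L) (x : Cantor) (l N : ℕ)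
    (h : ∀ j < N, (L : ℤ) ≤ l + D (g ^ j) x) : ∃ v, Acts (g ^ N) (tk l x) v := by
  induction N with
  | zero => exact ⟨tk l x, fun ξ => rfl⟩
  | succ N ih =>
    obtain ⟨v, hv⟩ := ih fun j hj => h j (by omega)
    have h1 := h N (by omega)
    rw [D_eq hv] at h1
    obtain ⟨w, hw⟩ := hL v.length (by omega) ((g ^ N) x)
    rw [← hv.eq_tk] at hw
    exact ⟨w, pow_succ' g N ▸ hw.mul hv⟩

/-- An element whose powers have uniformly bounded logarithmic derivative has finite order: every
power is given by a map from the words of length `L + K` to the words of length at most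
`L + 2 * K`. -/
lemma exists_pow_eq_of_bounded {g : Equiv.Perm Cantor} (hg : Lin g) (K : ℕ)
    (hK : ∀ (N : ℕ) x, |D (g ^ N) x| ≤ K) : ∃ N N' : ℕ, N ≠ N' ∧ g ^ N = g ^ N' := by
  obtain ⟨L, hL⟩ := hg
  have ht : ∀ N x, ∃ v, Acts (g ^ N) (tk (L + K) x) v := fun N x =>
    track hL x _ N fun j _ => by
      have := abs_le.mp (hK j x)
      push_cast
      linarith [this.1]
  choose v hv using ht
  have hvl : ∀ N x, (v N x).length ≤ L + 2 * K := by
    intro N x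
    have h1 := D_eq (hv N x)
    have h2 := abs_le.mp (hK N x)
    push_cast at h1
    omega
  have : Finite {w : List Bool // w.length ≤ L + 2 * K} :=
    (List.finite_length_le Bool (L + 2 * K)).to_subtype
  let e : (Fin (L + K) → Bool) → Cantor := fun f i => if h : i < L + K then f ⟨i, h⟩ else false
  let F : ℕ → (Fin (L + K) → Bool) → {w : List Bool // w.length ≤ L + 2 * K} :=
    fun N f => ⟨v N (e f), hvl N _⟩
  obtain ⟨N, N', hne, hF⟩ := Finite.exists_ne_map_eq_of_infinite F
  refine ⟨N, N', hne, Equiv.ext fun x => ?_⟩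
  have h1 : tk (L + K) (e fun i => x i) = tk (L + K) x := by
    simp [tk, e]
  have h2 := hv N (e fun i => x i)
  have h3 := hv N' (e fun i => x i)
  have h4 : v N (e fun i => x i) = v N' (e fun i => x i) :=
    congrArg Subtype.val (congrFun hF fun i => x i)
  rw [h1] at h2 h3
  rw [← prepend_tk (L + K) x, h2, h3, h4]

/-- If the logarithmic derivatives of the powers of `g` are unbounded below, then some power of `g`
expands a cone onto a larger one. -/
lemma exists_expanding {g : Equiv.Perm Cantor} (hg : ∀ N : ℕ, Lin (g ^ N))
    (hunb : ∀ K : ℕ, ∃ (N : ℕ) (x : Cantor), D (g ^ N) x < -K) :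
    ∃ (k : ℕ) (v t : List Bool), 0 < k ∧ t ≠ [] ∧ Acts (g ^ k) (v ++ t) v := by
  have hg1 : Lin g := by simpa using hg 1
  obtain ⟨C, hC⟩ := D_bounded hg1
  obtain ⟨L, hL⟩ := hg1
  obtain ⟨N, x, hN⟩ := hunb (2 ^ L * (C + 1))
  -- The thresholds `-i * (C + 1)` are spaced by more than the largest possible drop in one step.
  have hex : ∀ i : Fin (2 ^ L + 1), ∃ j : ℕ, D (g ^ j) x ≤ -(i * (C + 1) : ℕ) := by
    intro i
    refine ⟨N, hN.le.trans ?_⟩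
    have := Nat.mul_le_mul_right (C + 1) (Nat.lt_succ_iff.mp i.2)
    omega
  classical
  let T : Fin (2 ^ L + 1) → ℕ := fun i => Nat.find (hex i)
  have hT : ∀ i, D (g ^ T i) x ≤ -(i * (C + 1) : ℕ) := fun i => Nat.find_spec (hex i)
  have hTmin : ∀ i, ∀ j < T i, -(i * (C + 1) : ℕ) < D (g ^ j) x := fun i j hj =>
    not_le.mp (Nat.find_min (hex i) hj)
  have hTlow : ∀ i : Fin (2 ^ L + 1), -((i + 1) * (C + 1) : ℕ) < D (g ^ T i) x := by
    intro i
    rcases hTi : T i with _ | j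
    · rw [pow_zero, D_one]
      have : 0 < ((i : ℕ) + 1) * (C + 1) := by positivity
      omega
    · have h1 := hTmin i j (by omega)
      rw [pow_succ', D_mul ⟨L, hL⟩ (hg j)]
      have h2 := abs_le.mp (hC ((g ^ j) x))
      have h3 := h2.1
      generalize D g ((g ^ j) x) = d at h3 ⊢
      push_cast at h1 ⊢
      linarith
  have hTle : ∀ i, D (g ^ T i) x ≤ 0 := fun i => (hT i).trans (by omega)
  -- At time `T i` the prefix of length `L - D` is mapped to a word of length exactly `L`.
  let l : Fin (2 ^ L + 1) → ℕ := fun i => (L - D (g ^ T i) x).toNat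
  have hl : ∀ i, (l i : ℤ) = L - D (g ^ T i) x := fun i =>
    Int.toNat_of_nonneg (by have := hTle i; omega)
  have htr : ∀ i, ∃ v, Acts (g ^ T i) (tk (l i) x) v := fun i =>
    track hL x _ _ fun j hj => by
      have h1 := hTmin i j hj
      have h2 := hT i
      rw [hl]
      omega
  choose v hv using htr
  have hvl : ∀ i, (v i).length = L := by
    intro i
    have := D_eq (hv i)
    have := hl i
    omega
  have hpig : ∃ i j, i ≠ j ∧ v i = v j := by
    let F : Fin (2 ^ L + 1) → List.Vector Bool L := fun i => ⟨v i, hvl i⟩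
    obtain ⟨i, j, hij, hF⟩ := Fintype.exists_ne_map_eq_of_card_lt F (by simp)
    exact ⟨i, j, hij, congrArg Subtype.val hF⟩
  have hmain : ∀ i j, i < j → v i = v j →
      ∃ (k : ℕ) (v t : List Bool), 0 < k ∧ t ≠ [] ∧ Acts (g ^ k) (v ++ t) v := by
    intro i j hij hvij
    have hD : D (g ^ T j) x < D (g ^ T i) x := by
      have h1 := hT j
      have h2 := hTlow i
      have h3 : ((i : ℕ) + 1) * (C + 1) ≤ j * (C + 1) := Nat.mul_le_mul_right _ hij
      omega
    have hTij : T i < T j := by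
      refine lt_of_le_of_ne ?_ fun h => by rw [h] at hD; exact lt_irrefl _ hD
      refine Nat.find_min' (hex i) ((hT j).trans ?_)
      have h3 : (i : ℕ) * (C + 1) ≤ j * (C + 1) := Nat.mul_le_mul_right _ hij.le
      omega
    have hlij : l i < l j := by
      have := hl i
      have := hl j
      omega
    obtain ⟨d, hd⟩ := Nat.exists_eq_add_of_lt hlij
    obtain ⟨k, hk⟩ := Nat.exists_eq_add_of_lt hTij
    refine ⟨k + 1, v i, tk (d + 1) fun s => x (s + l i), by omega, ?_, fun ξ => ?_⟩
    · intro h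
      simpa using congrArg List.length h
    · have h1 := (hv i).append (tk (d + 1) fun s => x (s + l i))
      have h2 := hv j
      rw [← tk_add, ← add_assoc, ← hd] at h1
      rw [← h1, ← Equiv.Perm.mul_apply, ← pow_add, show k + 1 + T i = T j by omega, h2, hvij]
  obtain ⟨i, j, hij, hv'⟩ := hpig
  rcases lt_or_gt_of_ne hij with h | h
  · exact hmain i j h hv'
  · exact hmain j i h hv'.symm

lemma growth_of_expanding {g : Equiv.Perm Cantor} (hg : ∀ N : ℕ, Lin (g ^ N)) {k : ℕ}
    {v t : List Bool} (ht : t ≠ []) (h : Acts (g ^ k) (v ++ t) v) (N : ℕ) :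
    (N : ℝ) ≤ M (g ^ (k * N)) := by
  have key : ∃ s : List Bool, N ≤ s.length ∧ Acts (g ^ (k * N)) (v ++ s) v := by
    induction N with
    | zero => exact ⟨[], by simp, fun ξ => by simp⟩
    | succ N ih =>
      obtain ⟨s, hs, hs'⟩ := ih
      refine ⟨t ++ s, ?_, ?_⟩
      · have := List.length_pos_iff.mpr ht
        rw [List.length_append]
        omega
      · rw [Nat.mul_succ, pow_add, ← List.append_assoc]
        exact hs'.mul (h.append s)
  obtain ⟨s, hs, hs'⟩ := key
  have h1 := le_M (hg (k * N)) (prepend (v ++ s) fun _ => false)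
  rw [← tk_prepend (v ++ s) fun _ => false] at hs'
  rw [D_eq hs'] at h1
  refine le_trans ?_ h1
  rw [List.length_append]
  push_cast
  rw [sub_add_cancel_left, abs_neg]
  exact le_trans (by exact_mod_cast hs) (le_abs_self _)

lemma M_inv_pow {H : Subgroup (Equiv.Perm Cantor)} (hH : ∀ g ∈ H, Lin g)
    {g : Equiv.Perm Cantor} (hg : g ∈ H) (N : ℕ) : M (g⁻¹ ^ N) = M (g ^ N) := by
  rw [inv_pow]
  exact M_inv (hH _ (H.pow_mem hg _)) (hH _ (H.inv_mem (H.pow_mem hg _)))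

/-- Elements of infinite order have linearly growing logarithmic derivatives along powers. -/
lemma linear_growth {H : Subgroup (Equiv.Perm Cantor)} (hH : ∀ g ∈ H, Lin g)
    {g : Equiv.Perm Cantor} (hg : g ∈ H) (hinf : ∀ N N' : ℕ, g ^ N = g ^ N' → N = N') :
    ∃ k : ℕ, 0 < k ∧ ∀ N : ℕ, (N : ℝ) ≤ M (g ^ (k * N)) := by
  have hpow : ∀ N : ℕ, Lin (g ^ N) := fun N => hH _ (H.pow_mem hg N)
  have hpow' : ∀ N : ℕ, Lin (g⁻¹ ^ N) := fun N => hH _ (H.pow_mem (H.inv_mem hg) N)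
  by_cases h1 : ∀ K : ℕ, ∃ (N : ℕ) (x : Cantor), D (g ^ N) x < -K
  · obtain ⟨k, v, t, hk, ht, h⟩ := exists_expanding hpow h1
    exact ⟨k, hk, growth_of_expanding hpow ht h⟩
  by_cases h2 : ∀ K : ℕ, ∃ (N : ℕ) (x : Cantor), D (g⁻¹ ^ N) x < -K
  · obtain ⟨k, v, t, hk, ht, h⟩ := exists_expanding hpow' h2
    refine ⟨k, hk, fun N => ?_⟩
    rw [← M_inv_pow hH hg]
    exact growth_of_expanding hpow' ht h N
  exfalso
  push Not at h1 h2
  obtain ⟨K, hK⟩ := h1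
  obtain ⟨K', hK'⟩ := h2
  obtain ⟨N, N', hne, he⟩ := exists_pow_eq_of_bounded (hH g hg) (max K K') (by
    intro N x
    have h3 := hK N x
    have h4 := hK' N ((g ^ N) x)
    rw [inv_pow, D_inv (hpow N) (by rw [← inv_pow]; exact hpow' N)] at h4
    rw [abs_le]
    push_cast
    constructor
    · have := le_max_left (K : ℤ) K'
      omega
    · have := le_max_right (K : ℤ) K'
      omega)
  exact hne (hinf N N' he)

lemma M_conj {H : Subgroup (Equiv.Perm Cantor)} (hH : ∀ g ∈ H, Lin g)
    {g b : Equiv.Perm Cantor} (hg : g ∈ H) (hb : b ∈ H) :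
    M (b⁻¹ * g * b) ≤ M g + 2 * M b := by
  have hb' := H.inv_mem hb
  have h1 := M_mul (hH _ (H.mul_mem hb' hg)) (hH _ hb)
  have h2 := M_mul (hH _ hb') (hH _ hg)
  rw [M_inv (hH _ hb) (hH _ hb')] at h2
  linarith

lemma M_zpow {H : Subgroup (Equiv.Perm Cantor)} (hH : ∀ g ∈ H, Lin g)
    {g : Equiv.Perm Cantor} (hg : g ∈ H) (z : ℤ) (N : ℕ) :
    M ((g ^ z) ^ N) = M (g ^ (z.natAbs * N)) := by
  rw [pow_mul]
  rcases Int.natAbs_eq z with h | h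
  · conv_lhs => rw [h, zpow_natCast]
  · conv_lhs => rw [h, zpow_neg, zpow_natCast]
    exact M_inv_pow hH (H.pow_mem hg _) N

/-- In a group of prefix replacements, the relation `b⁻¹ g ^ m b = g ^ n` with `|m| ≠ |n|` forces
`g` to have finite order. -/
lemma finite_order_of_conj {H : Subgroup (Equiv.Perm Cantor)} (hH : ∀ g ∈ H, Lin g)
    {g b : Equiv.Perm Cantor} (hg : g ∈ H) (hb : b ∈ H) {m n : ℤ} (hmn : m.natAbs ≠ n.natAbs)
    (hm : m ≠ 0) (hn : n ≠ 0)
    (hrel : b⁻¹ * g ^ m * b = g ^ n) : ¬ ∀ N N' : ℕ, g ^ N = g ^ N' → N = N' := by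
  intro hinf
  obtain ⟨k, hk, hgrow⟩ := linear_growth hH hg hinf
  let u : ℕ → ℝ := fun N => M (g ^ N)
  have hsub : Subadditive u := fun p q => by
    simp only [u, pow_add]
    exact M_mul (hH _ (H.pow_mem hg _)) (hH _ (H.pow_mem hg _))
  have hlim := hsub.tendsto_lim ⟨0, by
    rintro _ ⟨N, rfl⟩
    exact div_nonneg (M_nonneg _) (Nat.cast_nonneg _)⟩
  set lam := hsub.lim
  have hsubseq : ∀ c : ℕ, 0 < c →
      Tendsto (fun N : ℕ => u (c * N) / N) atTop (𝓝 (c * lam)) := by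
    intro c hc
    have h1 := (hlim.comp (tendsto_id.const_mul_atTop' hc)).const_mul (c : ℝ)
    refine h1.congr fun N => ?_
    have hc' : (c : ℝ) ≠ 0 := by positivity
    simp only [Function.comp, id]
    push_cast
    field_simp
  have hconj : ∀ N : ℕ, b⁻¹ * (g ^ m) ^ N * b = (g ^ n) ^ N := fun N => by
    have := conj_pow (a := b⁻¹) (b := g ^ m) (i := N)
    rw [inv_inv] at this
    rw [← hrel, this]
  have hle : ∀ N : ℕ, u (n.natAbs * N) ≤ u (m.natAbs * N) + 2 * M b := fun N => by
    simp only [u]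
    rw [← M_zpow hH hg, ← M_zpow hH hg, ← hconj]
    exact M_conj hH (H.pow_mem (H.zpow_mem hg _) _) hb
  have hge : ∀ N : ℕ, u (m.natAbs * N) ≤ u (n.natAbs * N) + 2 * M b := fun N => by
    simp only [u]
    rw [← M_zpow hH hg, ← M_zpow hH hg, ← M_inv (hH _ hb) (hH _ (H.inv_mem hb)),
      show (g ^ m) ^ N = b⁻¹⁻¹ * (g ^ n) ^ N * b⁻¹ by rw [← hconj]; group]
    exact M_conj hH (H.pow_mem (H.zpow_mem hg _) _) (H.inv_mem hb)
  have hsmall : Tendsto (fun N : ℕ => 2 * M b / (N : ℝ)) atTop (𝓝 0) :=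
    tendsto_const_div_atTop_nhds_zero_nat _
  have hcomp : ∀ c d : ℕ, 0 < c → 0 < d → (∀ N : ℕ, u (c * N) ≤ u (d * N) + 2 * M b) →
      c * lam ≤ d * lam := by
    intro c d hc hd h
    have h1 := (hsubseq d hd).add hsmall
    rw [add_zero] at h1
    refine le_of_tendsto_of_tendsto' (hsubseq c hc) h1 fun N => ?_
    rw [← add_div]
    gcongr
    exact h N
  have hm' := Int.natAbs_pos.mpr hm
  have hn' := Int.natAbs_pos.mpr hn
  have heq : (m.natAbs : ℝ) * lam = n.natAbs * lam :=
    le_antisymm (hcomp _ _ hm' hn' hge) (hcomp _ _ hn' hm' hle)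
  have hpos : 1 ≤ (k : ℝ) * lam := by
    refine ge_of_tendsto (hsubseq k hk) ?_
    filter_upwards [eventually_gt_atTop 0] with N hN
    rw [le_div_iff₀ (by exact_mod_cast hN), one_mul]
    exact hgrow N
  have hlam : lam ≠ 0 := by
    intro h
    rw [h, mul_zero] at hpos
    linarith
  exact hmn (by exact_mod_cast mul_right_cancel₀ hlam heq)

/-! ### The Baumslag–Solitar group -/

lemma bs_rel (m n : ℤ) : (BS.b m n)⁻¹ * BS.a m n ^ m * BS.b m n = BS.a m n ^ n := by
  have h := PresentedGroup.one_of_mem (rels := bsRels m n) rfl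
  simp only [map_mul, map_inv, map_zpow] at h
  exact mul_inv_eq_one.mp h

/-- Infinite order of `a`, seen in the action of `BS m n` on `ℚ` by affine maps. -/
lemma bs_a_infinite {m n : ℤ} (hm : m ≠ 0) (hn : n ≠ 0) (N N' : ℕ)
    (h : BS.a m n ^ N = BS.a m n ^ N') : N = N' := by
  have hr : (m / n : ℚ) ≠ 0 := by positivity
  let f : Fin 2 → Equiv.Perm ℚ := ![Equiv.addRight 1, Equiv.mulRight₀ (m / n : ℚ) hr]
  have hz : ∀ z : ℤ, ∀ x : ℚ, ((Equiv.addRight (1 : ℚ)) ^ z : Equiv.Perm ℚ) x = x + z := by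
    intro z x
    induction z generalizing x with
    | zero => simp
    | succ k ih => rw [zpow_add_one, Equiv.Perm.mul_apply, ih]; simp; ring
    | pred k ih =>
      rw [zpow_sub_one, Equiv.Perm.mul_apply, ih, Equiv.Perm.inv_def, Equiv.addRight_symm]
      simp
      ring
  have hf : ∀ r ∈ bsRels m n, FreeGroup.lift f r = 1 := by
    rintro r rfl
    simp only [map_mul, map_inv, map_zpow, FreeGroup.lift_apply_of]
    rw [mul_inv_eq_one, mul_assoc, inv_mul_eq_iff_eq_mul]
    ext x
    simp only [f, Matrix.cons_val_zero, Matrix.cons_val_one, Equiv.Perm.mul_apply, hz]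
    change x * (m / n : ℚ) + m = (x + n) * (m / n : ℚ)
    have : (n : ℚ) ≠ 0 := by exact_mod_cast hn
    field_simp
  have h1 := congrArg (fun y => (PresentedGroup.toGroup hf y) 0) h
  simp only [BS.a, map_pow, PresentedGroup.toGroup.of] at h1
  rw [← zpow_natCast, ← zpow_natCast] at h1
  simp only [f, Matrix.cons_val_zero, hz] at h1
  simpa using h1

end BSV

/-- If `|m| ≠ |n|` (with `m, n` nonzero), then `BS(m,n)` does not embed in Thompson's
group `V`: every homomorphism from `BS(m,n)` to the permutation group of the Cantor
set whose image consists of prefix replacement maps fails to be injective. -/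
theorem BS_not_embed_in_V (m n : ℤ) (hm : m ≠ 0) (hn : n ≠ 0) (hmn : |m| ≠ |n|)
    (φ : BS m n →* Equiv.Perm Cantor)
    (hφ : ∀ x : BS m n, IsPrefixReplacement (φ x)) :
    ¬ Function.Injective φ := by
  intro hinj
  have hH : ∀ g ∈ φ.range, BSV.Lin g := by
    rintro _ ⟨x, rfl⟩
    exact BSV.IsPrefixReplacement.lin (hφ x)
  refine BSV.finite_order_of_conj hH (g := φ (BS.a m n)) (b := φ (BS.b m n)) ⟨_, rfl⟩ ⟨_, rfl⟩
    (m := m) (n := n) (fun h => hmn (by rw [Int.abs_eq_natAbs, Int.abs_eq_natAbs, h])) hm hn ?_ ?_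
  · simpa only [map_mul, map_inv, map_zpow] using congrArg φ (BSV.bs_rel m n)
  · intro N N' h
    rw [← map_pow, ← map_pow] at h
    exact BSV.bs_a_infinite hm hn N N' (hinj h)
end

section
/- Let τ be an element of QAut(T_{2,c}). For each word w : List Bool, let s_w be the longest common suffix of w and τ w, and write w = x_w ++ s_w and τ w = y_w ++ s_w. Then the set Γ_τ = {(x_w, y_w) | w : List Bool} is finite. -/
/-- The words at which `τ` is not determined by its value at the parent vertex: the root, and the
children of the bad vertices. -/
def exceptional (τ : Equiv.Perm (List Bool)) : Set (List Bool) :=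
  {[]} ∪ (fun q : List Bool × Bool => q.1 ++ [q.2]) '' (qautBad τ ×ˢ Set.univ)

lemma exceptional_finite {τ : Equiv.Perm (List Bool)} (h : (qautBad τ).Finite) :
    (exceptional τ).Finite :=
  (Set.finite_singleton _).union ((h.prod Set.finite_univ).image _)

lemma exists_exceptional_prefix (τ : Equiv.Perm (List Bool)) (w : List Bool) :
    ∃ u ∈ exceptional τ, ∃ t, w = u ++ t ∧ τ w = τ u ++ t := by
  induction w using List.reverseRecOn with
  | nil => exact ⟨[], Or.inl rfl, [], by simp, by simp⟩
  | append_singleton w x ih =>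
    by_cases hw : w ∈ qautBad τ
    · exact ⟨w ++ [x], Or.inr ⟨(w, x), ⟨hw, trivial⟩, rfl⟩, [], by simp, by simp⟩
    · obtain ⟨u, hu, t, h1, h2⟩ := ih
      simp only [qautBad, Set.mem_setOf_eq, not_exists, not_not] at hw
      refine ⟨u, hu, t ++ [x], ?_, ?_⟩
      · rw [← List.append_assoc, ← h1]
      · rw [hw x, h2, List.append_assoc]

/-- Removing a longer suffix leaves a shorter prefix. -/
lemma prefix_of_append_eq {p s u t : List Bool} (h : p ++ s = u ++ t)
    (hl : t.length ≤ s.length) : p <+: u := by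
  have hlen := congrArg List.length h
  simp only [List.length_append] at hlen
  exact List.prefix_of_prefix_length_le (List.prefix_append p s)
    (h ▸ List.prefix_append u t) (by omega)

lemma finite_prefixes (u : List Bool) : {p : List Bool | p <+: u}.Finite :=
  u.inits.finite_toSet.subset fun p hp => (List.mem_inits p u).2 hp

/-- For `τ ∈ QAut(T_{2,c})`, write each `w` as `w = x_w ++ s_w` and
`τ w = y_w ++ s_w` where `s_w` is the longest common suffix of `w` and `τ w`.
Then the set `Γ_τ` of pairs `(x_w, y_w)` is finite. -/
theorem gamma_finite (τ : Equiv.Perm (List Bool)) (hτ : τ ∈ QAut) :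
    {p : List Bool × List Bool |
      ∃ w s : List Bool, w = p.1 ++ s ∧ τ w = p.2 ++ s ∧
        ∀ s' : List Bool, s' <:+ w → s' <:+ τ w → s'.length ≤ s.length}.Finite := by
  refine ((exceptional_finite (τ := τ) hτ).biUnion fun u _ =>
    (finite_prefixes u).prod (finite_prefixes (τ u))).subset ?_
  rintro ⟨a, b⟩ ⟨w, s, h1, h2, hmax⟩
  obtain ⟨u, hu, t, h3, h4⟩ := exists_exceptional_prefix τ w
  have hl : t.length ≤ s.length := hmax t ⟨u, h3.symm⟩ ⟨τ u, h4.symm⟩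
  exact Set.mem_biUnion hu
    ⟨prefix_of_append_eq (h1.symm.trans h3) hl, prefix_of_append_eq (h2.symm.trans h4) hl⟩
end

section
/- Let τ be an element of QAut(T_{2,c}). Then there exists k ∈ ℕ such that for every word w : List Bool with length at least k and every word λ : List Bool, τ (w ++ λ) = (τ w) ++ λ. (This is the core of the disjoint decomposition: beneath level k, τ acts as an element of Thompson's group V.) -/
/-- For every `τ ∈ QAut(T_{2,c})` there is a level `k` beneath which `τ` acts by
appending: `τ (w ++ λ) = (τ w) ++ λ` for all `w` of length at least `k` and all `λ`. -/
theorem qaut_eventually_prefix (τ : Equiv.Perm (List Bool)) (hτ : τ ∈ QAut) :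
    ∃ k : ℕ, ∀ w : List Bool, k ≤ w.length →
      ∀ lam : List Bool, τ (w ++ lam) = (τ w) ++ lam := by
  -- `k` strictly exceeds the lengths of all words in the finite set `qautBad τ`.
  have hfin : (qautBad τ).Finite := hτ
  obtain ⟨m, hm⟩ := (hfin.image List.length).bddAbove
  refine ⟨m + 1, fun w hw lam => ?_⟩
  induction lam using List.reverseRecOn with
  | nil => simp
  | append_singleton l x ih =>
    have hgood : w ++ l ∉ qautBad τ := fun hbad => by
      have hle := hm (Set.mem_image_of_mem List.length hbad)
      simp only [List.length_append] at hle
      omega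
    simp only [qautBad, Set.mem_setOf_eq, not_exists, not_not] at hgood
    rw [← List.append_assoc, hgood x, ih, List.append_assoc]
end

section
/- Let τ be an element of QAut(T_{2,c}) and let k ∈ ℕ be such that for every word w : List Bool of length at least k and every x : Bool, τ (w ++ [x]) = (τ w) ++ [x]. Then the image set {τ w | w : List Bool, length w = k} is a finite complete antichain: distinct elements of this set are incomparable in the prefix order, and every ξ : ℕ → Bool has an initial segment lying in this set. -/
theorem map_append_of_level {τ : List Bool → List Bool} {k : ℕ}
    (hk : ∀ w : List Bool, k ≤ w.length → ∀ x : Bool, τ (w ++ [x]) = τ w ++ [x])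
    (u s : List Bool) (hu : k ≤ u.length) : τ (u ++ s) = τ u ++ s := by
  induction s using List.reverseRecOn with
  | nil => simp
  | append_singleton s x ih =>
    rw [← List.append_assoc, hk _ (by rw [List.length_append]; omega), ih, List.append_assoc]

theorem eq_ofFn_of_prefix_ofFn (ξ : Cantor) {n : ℕ} {a : List Bool}
    (h : a <+: List.ofFn fun i : Fin n => ξ i) :
    (List.ofFn fun i : Fin a.length => ξ i) = a := by
  apply List.ext_getElem (by simp)
  intro i _ hi
  rw [h.getElem hi]
  simp

/-- If `τ ∈ QAut(T_{2,c})` respects the child relation at every vertex of length at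
least `k`, then the image of the set of words of length `k` under `τ` is a finite
complete antichain. -/
theorem qaut_image_level_is_antichain (τ : Equiv.Perm (List Bool)) (hτ : τ ∈ QAut)
    (k : ℕ) (hk : ∀ w : List Bool, k ≤ w.length →
      ∀ x : Bool, τ (w ++ [x]) = (τ w) ++ [x]) :
    IsCompleteAntichain (τ '' {w : List Bool | w.length = k}) := by
  refine ⟨(List.finite_length_eq Bool k).image τ, ?_, fun ξ => ?_⟩
  · rintro _ ⟨u, hu, rfl⟩ _ ⟨v, hv, rfl⟩ hne ⟨s, hs⟩
    simp only [Set.mem_setOf_eq] at hu hv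
    rw [← map_append_of_level hk u s hu.ge] at hs
    have huv : u ++ s = v := τ.injective hs
    have hlen := congrArg List.length huv
    rw [List.length_append] at hlen
    have hnil : s = [] := List.length_eq_zero_iff.mp (by omega)
    exact hne (by rw [← huv, hnil, List.append_nil])
  · obtain ⟨n, hn⟩ : ∃ n : ℕ, k ≤ (τ.symm (List.ofFn fun i : Fin n => ξ i)).length := by
      by_contra! hcon
      -- Otherwise `n ↦ τ⁻¹ (ξ|n)` would inject `ℕ` into the finite set of words shorter than `k`.
      have hinj : Function.Injective
          fun n : ℕ => τ.symm (List.ofFn fun i : Fin n => ξ i) := fun m n hmn => by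
        simpa using congrArg List.length (τ.symm.injective hmn)
      exact Set.infinite_of_injective_forall_mem hinj hcon (List.finite_length_lt Bool k)
    set w := τ.symm (List.ofFn fun i : Fin n => ξ i) with hw
    have hlen : (w.take k).length = k := by rw [List.length_take]; omega
    have hpre : τ (w.take k) <+: List.ofFn fun i : Fin n => ξ i := by
      refine ⟨w.drop k, ?_⟩
      rw [← map_append_of_level hk _ _ hlen.ge, List.take_append_drop, hw,
        Equiv.apply_symm_apply]
    exact ⟨(τ (w.take k)).length, w.take k, hlen, (eq_ofFn_of_prefix_ofFn ξ hpre).symm⟩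
end

section
/- Let m ≥ 1 be an integer and let e ∈ {1, -1}. Then there is an injective group homomorphism from the Baumslag–Solitar group BS(m, e·m) into the direct product ((ℤ/mℤ) ∗ ℤ) × (ℤ ⋊_φ ℤ), where (ℤ/mℤ) ∗ ℤ is the free product of the cyclic group of order m and the infinite cyclic group, and ℤ ⋊_φ ℤ is the semidirect product in which the generator of the acting copy of ℤ acts on ℤ by multiplication by e. The homomorphism is the pair consisting of the quotient by the normal closure of aᵐ and the map sending a ↦ a', b ↦ b' to the images of the generators of BS(1,e) ≅ ℤ ⋊_φ ℤ. -/
/-- Von Dyck's theorem for `BS(m,n)`: a pair satisfying the defining relation extends to a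
homomorphism. -/
theorem BS.exists_hom {G : Type*} [Group G] (m n : ℤ) (x y : G)
    (h : y⁻¹ * x ^ m * y = x ^ n) :
    ∃ f : BS m n →* G, f (BS.a m n) = x ∧ f (BS.b m n) = y := by
  have hr : ∀ r ∈ bsRels m n, FreeGroup.lift ![x, y] r = 1 := by
    rintro r rfl
    simp [h]
  exact ⟨PresentedGroup.toGroup hr, PresentedGroup.toGroup.of hr, PresentedGroup.toGroup.of hr⟩

theorem BS.rel (m n : ℤ) :
    (BS.b m n)⁻¹ * BS.a m n ^ m * BS.b m n = BS.a m n ^ n := by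
  have h := PresentedGroup.one_of_mem (rels := bsRels m n) rfl
  simp only [map_mul, map_inv, map_zpow] at h
  exact mul_inv_eq_one.mp h

theorem BS.hom_ext {G : Type*} [Group G] {m n : ℤ} {f g : BS m n →* G}
    (ha : f (BS.a m n) = g (BS.a m n)) (hb : f (BS.b m n) = g (BS.b m n)) : f = g := by
  refine PresentedGroup.ext fun i => ?_
  fin_cases i
  exacts [ha, hb]

/-- Every conjugation sends `c = aᵐ` to `c` or `c⁻¹`: the elements doing so form a subgroup
containing both generators. -/
theorem BS.conj_pow (m : ℕ) (e : ℤ) (he : e = 1 ∨ e = -1) (c : BS m (e * m))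
    (hc : c = BS.a m (e * m) ^ m) (g : BS m (e * m)) :
    g * c * g⁻¹ = c ∨ g * c * g⁻¹ = c⁻¹ := by
  have hinv : ∀ g : BS m (e * m), (g * c * g⁻¹ = c ∨ g * c * g⁻¹ = c⁻¹) →
      (g⁻¹ * c * g⁻¹⁻¹ = c ∨ g⁻¹ * c * g⁻¹⁻¹ = c⁻¹) := by
    rintro g (h | h)
    · left
      nth_rw 1 [← h]
      group
    · right
      have h' : c = (g * c * g⁻¹)⁻¹ := by rw [h, inv_inv]
      nth_rw 1 [h']
      group
  have hg : g ∈ Subgroup.closure (Set.range (PresentedGroup.of (rels := bsRels m (e * m)))) := by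
    rw [PresentedGroup.closure_range_of]; trivial
  induction hg using Subgroup.closure_induction with
  | mem x hx =>
    obtain ⟨i, rfl⟩ := hx
    fin_cases i
    · left
      change BS.a m (e * m) * c * (BS.a m (e * m))⁻¹ = c
      rw [hc]; group
    · rw [← inv_inv (PresentedGroup.of _)]
      apply hinv
      change (BS.b m (e * m))⁻¹ * c * (BS.b m (e * m))⁻¹⁻¹ = c ∨
        (BS.b m (e * m))⁻¹ * c * (BS.b m (e * m))⁻¹⁻¹ = c⁻¹
      have h : (BS.b m (e * m))⁻¹ * c * BS.b m (e * m) = c ^ e := by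
        rw [hc, ← zpow_natCast, BS.rel, ← zpow_mul, mul_comm e]
      rw [inv_inv, h]
      rcases he with he | he
      · exact Or.inl ((congrArg (c ^ ·) he).trans (zpow_one c))
      · exact Or.inr ((congrArg (c ^ ·) he).trans (zpow_neg_one c))
  | one => left; group
  | mul x y _ _ hx hy =>
    have h1 : x * y * c * (x * y)⁻¹ = x * (y * c * y⁻¹) * x⁻¹ := by group
    have h2 : x * c⁻¹ * x⁻¹ = (x * c * x⁻¹)⁻¹ := by group
    rw [h1]
    rcases hx with hx | hx <;> rcases hy with hy | hy <;> simp [hy, h2, hx]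
  | inv x _ hx => exact hinv x hx

theorem BS.zpowers_normal (m : ℕ) (e : ℤ) (he : e = 1 ∨ e = -1) :
    (Subgroup.zpowers (BS.a m (e * m) ^ m)).Normal := by
  refine ⟨?_⟩
  rintro _ ⟨k, rfl⟩ g
  simp only [← conj_zpow]
  refine Subgroup.zpow_mem _ ?_ k
  rcases BS.conj_pow m e he _ rfl g with h | h <;> rw [h]
  · exact Subgroup.mem_zpowers _
  · exact inv_mem (Subgroup.mem_zpowers _)

/-- A pair `x, y` with `xᵐ = 1` defines a homomorphism out of `ℤ/m ∗ ℤ`. -/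
theorem exists_coprod_hom {G : Type*} [Group G] (m : ℕ) (x y : G) (h : x ^ m = 1) :
    ∃ f : Monoid.Coprod (Multiplicative (ZMod m)) (Multiplicative ℤ) →* G,
      f (.inl (.ofAdd 1)) = x ∧ f (.inr (.ofAdd 1)) = y := by
  let u : ZMod m →+ Additive G := ZMod.lift m ⟨(zpowersHom G x).toAdditiveRight, by
    apply Additive.toMul.injective; simpa using h⟩
  refine ⟨Monoid.Coprod.lift (AddMonoidHom.toMultiplicativeLeft u) (zpowersHom G y), ?_, ?_⟩
  · have h1 : u ((1 : ℤ) : ZMod m) = Additive.ofMul x := by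
      rw [ZMod.lift_coe]; simp
    rw [Int.cast_one] at h1
    simp [h1]
  · simp

/-- For `m ≥ 1` and `e ∈ {1, -1}`, the group `BS(m, e·m)` embeds into
`((ℤ/mℤ) ∗ ℤ) × (ℤ ⋊_φ ℤ)`, where the generator of the acting copy of `ℤ` acts on
`ℤ` by multiplication by `e`; the embedding is the pair consisting of the quotient by
the normal closure of `aᵐ` and the map sending the generators `a, b` to the generators
of `ℤ ⋊_φ ℤ ≅ BS(1,e)`. -/
theorem BS_m_em_embeds_in_product (m : ℕ) (hm : 1 ≤ m) (e : ℤ) (he : e = 1 ∨ e = -1)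
    (φ : Multiplicative ℤ →* MulAut (Multiplicative ℤ))
    (hφ : ∀ x : Multiplicative ℤ, φ (Multiplicative.ofAdd 1) x = x ^ e) :
    ∃ (f₁ : BS m (e * m) →* Monoid.Coprod (Multiplicative (ZMod m)) (Multiplicative ℤ))
      (f₂ : BS m (e * m) →* Multiplicative ℤ ⋊[φ] Multiplicative ℤ),
      Function.Surjective f₁ ∧
      MonoidHom.ker f₁ = Subgroup.normalClosure {(BS.a m (e * m)) ^ m} ∧
      f₂ (BS.a m (e * m)) = SemidirectProduct.inl (Multiplicative.ofAdd 1) ∧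
      f₂ (BS.b m (e * m)) = SemidirectProduct.inr (Multiplicative.ofAdd 1) ∧
      Function.Injective (f₁.prod f₂) := by
  have hee : e * e = 1 := by rcases he with rfl | rfl <;> rfl
  have hx : (Monoid.Coprod.inl (Multiplicative.ofAdd 1) :
      Monoid.Coprod (Multiplicative (ZMod m)) (Multiplicative ℤ)) ^ m = 1 := by
    rw [← map_pow, ← ofAdd_nsmul]; simp
  obtain ⟨f₁, h1a, h1b⟩ := BS.exists_hom (m : ℤ) (e * m)
    (Monoid.Coprod.inl (Multiplicative.ofAdd 1) :
      Monoid.Coprod (Multiplicative (ZMod m)) (Multiplicative ℤ))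
    (Monoid.Coprod.inr (Multiplicative.ofAdd 1)) (by
      rw [mul_comm e, zpow_mul, zpow_natCast, hx]; simp)
  obtain ⟨f₂, h2a, h2b⟩ := BS.exists_hom (m : ℤ) (e * m)
    (SemidirectProduct.inl (Multiplicative.ofAdd 1) : Multiplicative ℤ ⋊[φ] Multiplicative ℤ)
    (SemidirectProduct.inr (Multiplicative.ofAdd 1)) (by
      -- The action of `b` is an involution on `ℤ`, so the action of `b⁻¹` is also `x ↦ xᵉ`.
      have key : ∀ x, (φ (Multiplicative.ofAdd 1))⁻¹ x = x ^ e := fun x => by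
        rw [MulAut.inv_apply, MulEquiv.symm_apply_eq, hφ, ← zpow_mul, hee, zpow_one]
      rw [← map_zpow, ← map_inv, ← SemidirectProduct.inl_aut_inv, key, map_zpow, map_zpow,
        ← zpow_mul, mul_comm])
  have hker : f₁.ker = Subgroup.normalClosure {(BS.a m (e * m)) ^ m} := by
    apply le_antisymm
    · set N := Subgroup.normalClosure {(BS.a m (e * m)) ^ m}
      obtain ⟨g, ga, gb⟩ := exists_coprod_hom m (QuotientGroup.mk' N (BS.a m (e * m)))
        (QuotientGroup.mk' N (BS.b m (e * m))) (by
          rw [← map_pow, ← MonoidHom.mem_ker, QuotientGroup.ker_mk']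
          exact Subgroup.subset_normalClosure rfl)
      have hg : g.comp f₁ = QuotientGroup.mk' N :=
        BS.hom_ext (by simp [h1a, ga]) (by simp [h1b, gb])
      intro z hz
      rw [← QuotientGroup.ker_mk' N, MonoidHom.mem_ker, ← hg, MonoidHom.comp_apply,
        MonoidHom.mem_ker.mp hz, map_one]
    · apply Subgroup.normalClosure_le_normal
      rintro _ rfl
      change f₁ _ = 1
      rw [map_pow, h1a, hx]
  refine ⟨f₁, f₂, ?_, hker, h2a, h2b, ?_⟩
  · rw [← MonoidHom.range_eq_top, eq_top_iff, ← Monoid.Coprod.range_inl_sup_range_inr]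
    refine sup_le ?_ ?_
    · rintro _ ⟨t, rfl⟩
      obtain ⟨k, hk⟩ := ZMod.intCast_surjective (Multiplicative.toAdd t)
      refine ⟨BS.a m (e * m) ^ k, ?_⟩
      rw [map_zpow, h1a, ← map_zpow, ← ofAdd_zsmul, zsmul_one, hk, ofAdd_toAdd]
    · rintro _ ⟨t, rfl⟩
      refine ⟨BS.b m (e * m) ^ Multiplicative.toAdd t, ?_⟩
      rw [map_zpow, h1b, ← map_zpow, ← ofAdd_zsmul, zsmul_one, Int.cast_id, ofAdd_toAdd]
  · rw [injective_iff_map_eq_one]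
    intro z hz
    obtain ⟨hz1, hz2⟩ : f₁ z = 1 ∧ f₂ z = 1 := by simpa [Prod.ext_iff] using hz
    have hzN : z ∈ Subgroup.zpowers (BS.a m (e * m) ^ m) := by
      have := BS.zpowers_normal m e he
      refine Subgroup.normalClosure_le_normal ?_ (hker ▸ MonoidHom.mem_ker.mpr hz1)
      rintro _ rfl
      exact Subgroup.mem_zpowers _
    obtain ⟨k, rfl⟩ := hzN
    simp only [map_zpow, map_pow, h2a] at hz2
    rw [← map_pow, ← map_zpow, ← map_one SemidirectProduct.inl, SemidirectProduct.inl_inj,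
      ← ofAdd_nsmul, ← ofAdd_zsmul, ofAdd_eq_one] at hz2
    have hk : k = 0 := by
      simp only [smul_eq_mul, nsmul_eq_mul, mul_one, mul_eq_zero] at hz2
      omega
    simp [hk]
end

section
/- There is an injective group homomorphism from V × V into V, where V denotes Thompson's group V, the group of prefix replacement permutations of the Cantor set C = ℕ → Bool. -/
/-- Splitting off the first letter identifies the Cantor set with two copies of itself. -/
def splitHead : Cantor ≃ (Σ _ : Bool, Cantor) where
  toFun ξ := ⟨ξ 0, fun n => ξ (n + 1)⟩
  invFun p := fun n => Nat.casesOn n p.1 p.2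
  left_inv ξ := by
    funext n
    cases n <;> rfl
  right_inv _ := rfl

/-- The permutation acting as `g b` on the cylinder of sequences with first letter `b`. -/
def join : (Bool → Equiv.Perm Cantor) →* Equiv.Perm Cantor :=
  (splitHead.symm.permCongrHom.toMonoidHom).comp
    (Equiv.Perm.sigmaCongrRightHom fun _ : Bool => Cantor)

theorem join_injective : Function.Injective join :=
  splitHead.symm.permCongrHom.injective.comp Equiv.Perm.sigmaCongrRightHom_injective

theorem join_apply (g : Bool → Equiv.Perm Cantor) (b : Bool) (ξ : Cantor) :
    join g (splitHead.symm ⟨b, ξ⟩) = splitHead.symm ⟨b, g b ξ⟩ := rfl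

theorem prepend_cons (b : Bool) (w : List Bool) (ξ : Cantor) :
    prepend (b :: w) ξ = splitHead.symm ⟨b, prepend w ξ⟩ := by
  funext n
  cases n with
  | zero => simp [prepend, splitHead]
  | succ n => simp [prepend, splitHead]

/-- The set of words `b :: w` with `w ∈ A b`, i.e. `0A₀ ∪ 1A₁`. -/
def graft (A : Bool → Set (List Bool)) : Set (List Bool) :=
  {l | ∃ b, ∃ w ∈ A b, l = b :: w}

theorem isCompleteAntichain_graft {A : Bool → Set (List Bool)}
    (hA : ∀ b, IsCompleteAntichain (A b)) : IsCompleteAntichain (graft A) := by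
  refine ⟨?_, ?_, ?_⟩
  · have h : graft A = ⋃ b, (fun w => b :: w) '' A b := by
      ext l
      simp only [graft, Set.mem_ofPred_eq, Set.mem_iUnion, Set.mem_image, eq_comm]
    rw [h]
    exact Set.finite_iUnion fun b => (hA b).1.image _
  · rintro _ ⟨b, w, hw, rfl⟩ _ ⟨c, v, hv, rfl⟩ hne hpre
    obtain ⟨rfl, hwv⟩ := List.cons_prefix_cons.1 hpre
    exact (hA b).2.1 w hw v hv (fun h => hne (h ▸ rfl)) hwv
  · intro ξ
    obtain ⟨n, hn⟩ := (hA (ξ 0)).2.2 fun n => ξ (n + 1)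
    exact ⟨n + 1, ξ 0, _, hn, by simp [List.ofFn_succ]⟩

/-- A word of `graft A` is determined by its first letter and the remaining word. -/
noncomputable def graftEquiv (A : Bool → Set (List Bool)) : (Σ b, A b) ≃ graft A :=
  Equiv.ofBijective (fun p => ⟨p.1 :: p.2.1, p.1, p.2.1, p.2.2, rfl⟩) <| by
    constructor
    · rintro ⟨b, w, hw⟩ ⟨c, v, hv⟩ h
      obtain ⟨rfl, rfl⟩ := List.cons_eq_cons.1 (congrArg Subtype.val h)
      rfl
    · rintro ⟨_, b, w, hw, rfl⟩
      exact ⟨⟨b, w, hw⟩, rfl⟩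

theorem isPrefixReplacement_join {g : Bool → Equiv.Perm Cantor}
    (hg : ∀ b, IsPrefixReplacement (g b)) : IsPrefixReplacement (join g) := by
  choose A B hA hB σ hσ using hg
  refine ⟨graft A, graft B, isCompleteAntichain_graft hA, isCompleteAntichain_graft hB,
    (graftEquiv A).symm.trans ((Equiv.sigmaCongrRight σ).trans (graftEquiv B)), ?_⟩
  intro a ξ
  obtain ⟨⟨b, w⟩, rfl⟩ := (graftEquiv A).surjective a
  simp only [Equiv.trans_apply, Equiv.symm_apply_apply]
  change join g (prepend (b :: w.1) ξ) = prepend (b :: (σ b w).1) ξ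
  rw [prepend_cons, prepend_cons, join_apply, hσ]

/-- There is an injective group homomorphism from `V × V` into `V`, where `V` is
Thompson's group `V`, the group of prefix replacement permutations of the Cantor set. -/
theorem V_times_V_embeds_in_V (V : Subgroup (Equiv.Perm Cantor))
    (hV : ∀ g : Equiv.Perm Cantor, g ∈ V ↔ IsPrefixReplacement g) :
    ∃ φ : V × V →* V, Function.Injective φ := by
  let pair : V × V →* (Bool → Equiv.Perm Cantor) :=
    MonoidHom.pi fun b =>
      V.subtype.comp (if b then MonoidHom.snd V V else MonoidHom.fst V V)
  have hmem : ∀ p, join (pair p) ∈ V := fun p =>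
    (hV _).2 <| isPrefixReplacement_join fun b => (hV _).1 (SetLike.coe_mem _)
  refine ⟨(join.comp pair).codRestrict V hmem, fun p q h => ?_⟩
  have hpq : pair p = pair q := join_injective (congrArg Subtype.val h)
  exact Prod.ext (Subtype.ext (congrFun hpq false)) (Subtype.ext (congrFun hpq true))
end

section
/- Let g be a prefix replacement permutation of the Cantor set C = ℕ → Bool of infinite order. Then there exists a positive integer m such that every finite orbit of the cyclic group generated by gᵐ acting on C is a singleton; that is, every point of C whose orbit under ⟨gᵐ⟩ is finite is a fixed point of gᵐ. -/
/-- The prefix of length `n` of a point of the Cantor set. -/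
def initSeg (x : Cantor) (n : ℕ) : List Bool := List.ofFn fun i : Fin n => x i

@[simp] lemma length_initSeg (x : Cantor) (n : ℕ) : (initSeg x n).length = n := by
  simp [initSeg]

lemma prepend_initSeg (x : Cantor) (n : ℕ) : prepend (initSeg x n) (fun i => x (i + n)) = x := by
  funext k
  by_cases h : k < n
  · simp [prepend, initSeg, h]
  · simp [prepend, h, Nat.sub_add_cancel (not_lt.mp h)]

lemma initSeg_prepend (a : List Bool) (ξ : Cantor) : initSeg (prepend a ξ) a.length = a := by
  apply List.ext_getElem
  · simp
  · intro i h1 h2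
    simp [initSeg, prepend]

lemma initSeg_add (x : Cantor) (m n : ℕ) :
    initSeg x (m + n) = initSeg x m ++ initSeg (fun i => x (i + m)) n := by
  apply List.ext_getElem
  · simp
  · intro i h1 h2
    simp only [initSeg, List.getElem_append, List.getElem_ofFn, List.length_ofFn]
    split_ifs with h
    · rfl
    · simp [Nat.sub_add_cancel (not_lt.mp h)]

/-- `c x` is the change of length of prefixes made by `g` near `x`; every prefix of length at
least `M` contains a word of the domain antichain, so `g` replaces it as a whole. -/
lemma exists_cocycle {g : Equiv.Perm Cantor} (hg : IsPrefixReplacement g) :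
    ∃ (M : ℕ) (c : Cantor → ℤ), ∀ (x : Cantor) (L : ℕ), M ≤ L →
      ∃ L' : ℕ, (L' : ℤ) = L + c x ∧
        ∀ ζ, g (prepend (initSeg x L) ζ) = prepend (initSeg (g x) L') ζ := by
  obtain ⟨A, B, ⟨hAfin, -, hA⟩, -, σ, hσ⟩ := hg
  choose ν hν using hA
  obtain ⟨M, hM⟩ := (hAfin.image List.length).bddAbove
  refine ⟨M, fun x => ((σ ⟨_, hν x⟩ : List Bool).length : ℤ) - ν x, fun x L hL => ?_⟩
  have hνM : ν x ≤ M := by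
    simpa using hM (Set.mem_image_of_mem List.length (hν x))
  obtain ⟨d, rfl⟩ := Nat.exists_eq_add_of_le (hνM.trans hL)
  set b : List Bool := (σ ⟨_, hν x⟩ : List Bool)
  set r : List Bool := initSeg (fun i => x (i + ν x)) d with hr
  have key : ∀ ζ, g (prepend (initSeg x (ν x + d)) ζ) = prepend (b ++ r) ζ := by
    intro ζ
    rw [initSeg_add, prepend_append, prepend_append]
    exact hσ ⟨_, hν x⟩ _
  have hgx : g x = prepend (b ++ r) (fun i => x (i + (ν x + d))) := by
    rw [← key, prepend_initSeg]
  refine ⟨(b ++ r).length, ?_, fun ζ => ?_⟩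
  · simp [hr]; ring
  · rw [key, hgx, initSeg_prepend]

lemma iterate_prefix {g : Equiv.Perm Cantor} {M : ℕ} {c : Cantor → ℤ}
    (hc : ∀ (x : Cantor) (L : ℕ), M ≤ L → ∃ L' : ℕ, (L' : ℤ) = L + c x ∧
      ∀ ζ, g (prepend (initSeg x L) ζ) = prepend (initSeg (g x) L') ζ)
    (y : Cantor) (L j : ℕ)
    (h : ∀ i < j, (M : ℤ) ≤ L + ∑ k ∈ Finset.range i, c ((g ^ k) y)) :
    ∃ L' : ℕ, (L' : ℤ) = L + ∑ k ∈ Finset.range j, c ((g ^ k) y) ∧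
      ∀ ζ, (g ^ j) (prepend (initSeg y L) ζ) = prepend (initSeg ((g ^ j) y) L') ζ := by
  induction j with
  | zero => exact ⟨L, by simp, fun ζ => by simp⟩
  | succ j ih =>
    obtain ⟨L₁, h1, h2⟩ := ih fun i hi => h i (by omega)
    have hL : M ≤ L₁ := by
      have := h j (by omega)
      omega
    obtain ⟨L₂, h3, h4⟩ := hc ((g ^ j) y) L₁ hL
    refine ⟨L₂, ?_, fun ζ => ?_⟩
    · rw [h3, h1, Finset.sum_range_succ]; ring
    · rw [pow_succ', Equiv.Perm.mul_apply, Equiv.Perm.mul_apply, h2, h4]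

/-- A sequence that increases by `s` over each period `N`, read from a point where it is minimal
over one period, does not fall below its starting value by more than `max 0 (-s)`. -/
lemma exists_min_start (S : ℕ → ℤ) (N : ℕ) (hN : 0 < N) (s : ℤ)
    (hS : ∀ i, S (i + N) = S i + s) :
    ∃ n, ∀ i < N, min 0 s ≤ S (n + i) - S n := by
  obtain ⟨n, hn, hmin⟩ := Finset.exists_min_image (Finset.range N) S ⟨0, by simpa using hN⟩
  refine ⟨n, fun i hi => ?_⟩
  rw [Finset.mem_range] at hn
  by_cases h : n + i < N
  · have := hmin (n + i) (by simpa using h)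
    omega
  · obtain ⟨d, hd⟩ := Nat.exists_eq_add_of_le' (not_lt.mp h)
    have := hmin d (by simp; omega)
    rw [hd, hS]
    omega

/-- The word `p` is pumped by `g ^ k`: on the cylinder of `p`, either `g ^ k` or its inverse
inserts a fixed word `t` (possibly empty) after `p`. -/
def Pumpable (g : Equiv.Perm Cantor) (p : List Bool) (k : ℕ) : Prop :=
  0 < k ∧ ∃ t : List Bool,
    (∀ ζ, (g ^ k) (prepend p ζ) = prepend (p ++ t) ζ) ∨
    (∀ ζ, (g ^ k) (prepend (p ++ t) ζ) = prepend p ζ)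

lemma exists_pumpable {g : Equiv.Perm Cantor} {M : ℕ} {c : Cantor → ℤ}
    (hc : ∀ (x : Cantor) (L : ℕ), M ≤ L → ∃ L' : ℕ, (L' : ℤ) = L + c x ∧
      ∀ ζ, g (prepend (initSeg x L) ζ) = prepend (initSeg (g x) L') ζ)
    (x : Cantor) (N : ℕ) (hN : 0 < N) (hx : (g ^ N) x = x) :
    ∃ n, Pumpable g (initSeg ((g ^ n) x) M) N := by
  set S : ℕ → ℤ := fun n => ∑ k ∈ Finset.range n, c ((g ^ k) x) with hSdef
  have hS : ∀ i, S (i + N) = S i + S N := by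
    intro i
    simp only [hSdef]
    rw [add_comm i N, Finset.sum_range_add, add_comm]
    congr 1
    refine Finset.sum_congr rfl fun k _ => ?_
    rw [add_comm, pow_add, Equiv.Perm.mul_apply, hx]
  obtain ⟨n, hn⟩ := exists_min_start S N hN (S N) hS
  refine ⟨n, hN, ?_⟩
  have hT : ∀ i, ∑ k ∈ Finset.range i, c ((g ^ k) ((g ^ n) x)) = S (n + i) - S n := by
    intro i
    simp only [hSdef]
    rw [Finset.sum_range_add, add_sub_cancel_left]
    refine Finset.sum_congr rfl fun k _ => ?_
    rw [add_comm, pow_add, Equiv.Perm.mul_apply]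
  have hy : (g ^ N) ((g ^ n) x) = (g ^ n) x := by
    rw [← Equiv.Perm.mul_apply, ← pow_add, add_comm, pow_add, Equiv.Perm.mul_apply, hx]
  generalize (g ^ n) x = y at hT hy ⊢
  -- the cylinder must be long enough to survive a drop of `-S N`
  obtain ⟨L', h1, h2⟩ := iterate_prefix hc y (M + (-(S N)).toNat) N (by
    intro i hi
    rw [hT]
    have := hn i hi
    push_cast
    omega)
  rw [hT, hS] at h1
  rw [hy] at h2
  rcases le_total 0 (S N) with hs | hs
  · have hz : (-(S N)).toNat = 0 := by omega
    rw [hz, add_zero] at h2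
    obtain ⟨d, rfl⟩ : ∃ d, L' = M + d := ⟨L' - M, by push_cast at h1; omega⟩
    exact ⟨_, Or.inl fun ζ => by rw [h2, initSeg_add]⟩
  · obtain rfl : L' = M := by push_cast at h1; omega
    rw [initSeg_add] at h2
    exact ⟨_, Or.inr h2⟩

lemma fixed_of_pump {h : Equiv.Perm Cantor} {p t : List Bool}
    (hp : ∀ ζ, h (prepend p ζ) = prepend (p ++ t) ζ) (N : ℕ) (hN : 0 < N) (ζ : Cantor)
    (hy : (h ^ N) (prepend p ζ) = prepend p ζ) : h (prepend p ζ) = prepend p ζ := by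
  by_cases ht : t = []
  · simpa [ht] using hp ζ
  -- applying `h` repeatedly fixes ever longer prefixes, independently of the tail
  have hpow : ∀ j : ℕ, ∃ u : List Bool, j ≤ u.length ∧
      ∀ ζ, (h ^ j) (prepend p ζ) = prepend p (prepend u ζ) := by
    intro j
    induction j with
    | zero => exact ⟨[], by simp, fun ζ => by simp [prepend_nil]⟩
    | succ j ih =>
      obtain ⟨u, hu, hju⟩ := ih
      refine ⟨t ++ u, ?_, fun ζ => ?_⟩
      · have := List.length_pos_of_ne_nil ht
        simp only [List.length_append]; omega
      · rw [pow_succ', Equiv.Perm.mul_apply, hju, hp, prepend_append, prepend_append]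
  have hyj : ∀ j : ℕ, (h ^ (N * j)) (prepend p ζ) = prepend p ζ := by
    intro j
    induction j with
    | zero => simp
    | succ j ih => rw [mul_add, mul_one, pow_add, Equiv.Perm.mul_apply, hy, ih]
  have hyj' : ∀ j : ℕ, (h ^ (N * j)) (h (prepend p ζ)) = h (prepend p ζ) := by
    intro j
    rw [← Equiv.Perm.mul_apply, ← pow_succ, pow_succ', Equiv.Perm.mul_apply, hyj]
  funext i
  obtain ⟨u, hu, hju⟩ := hpow (N * (i + 1))
  have hi : i < (p ++ u).length := by
    have : i + 1 ≤ N * (i + 1) := Nat.le_mul_of_pos_left _ hN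
    simp only [List.length_append]; omega
  have e1 : h (prepend p ζ) = prepend (p ++ u) (prepend t ζ) := by
    rw [← hyj' (i + 1), hp, prepend_append, hju, prepend_append]
  have e2 : prepend p ζ = prepend (p ++ u) ζ := by
    conv_lhs => rw [← hyj (i + 1), hju]
    rw [prepend_append]
  rw [e1, e2]
  simp only [prepend, hi, dite_true]

lemma pow_mul_fixed {g : Equiv.Perm Cantor} {k : ℕ} {y : Cantor} (h : (g ^ k) y = y) (j : ℕ) :
    (g ^ (k * j)) y = y := by
  rw [pow_mul]
  exact Equiv.Perm.pow_apply_eq_self_of_apply_eq_self h j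

lemma Pumpable.fixed {g : Equiv.Perm Cantor} {p : List Bool} {k : ℕ} (hk : Pumpable g p k)
    (N : ℕ) (hN : 0 < N) (ζ : Cantor) (hy : (g ^ N) (prepend p ζ) = prepend p ζ) :
    (g ^ k) (prepend p ζ) = prepend p ζ := by
  have hy' : ((g ^ k) ^ N) (prepend p ζ) = prepend p ζ := by
    rw [← pow_mul, mul_comm]
    exact pow_mul_fixed hy k
  obtain ⟨-, t, ht | ht⟩ := hk
  · exact fixed_of_pump ht N hN ζ hy'
  · have := fixed_of_pump (h := (g ^ k)⁻¹) (p := p) (t := t)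
      (fun ζ => by rw [Equiv.Perm.inv_eq_iff_eq, ht]) N hN ζ
      (by rw [inv_pow, Equiv.Perm.inv_eq_iff_eq, hy'])
    rw [Equiv.Perm.inv_eq_iff_eq] at this
    exact this.symm

lemma exists_period_of_finite {f : Equiv.Perm Cantor} {ξ : Cantor}
    (h : (Set.range fun n : ℤ => (f ^ n) ξ).Finite) : ∃ N : ℕ, 0 < N ∧ (f ^ N) ξ = ξ := by
  have hni : ¬ Function.Injective fun n : ℕ => (f ^ n) ξ := by
    intro hinj
    refine Set.infinite_range_of_injective hinj (h.subset ?_)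
    rintro _ ⟨n, rfl⟩
    exact ⟨n, by simp⟩
  simp only [Function.Injective, not_forall] at hni
  obtain ⟨a, b, hab, hne⟩ := hni
  wlog hlt : a < b generalizing a b
  · exact this b a hab.symm (Ne.symm hne) (by omega)
  obtain ⟨d, rfl⟩ := Nat.exists_eq_add_of_le hlt.le
  refine ⟨d, by omega, ?_⟩
  rw [pow_add, Equiv.Perm.mul_apply] at hab
  exact ((f ^ a).injective hab).symm

/-- If `g` is a prefix replacement permutation of the Cantor set of infinite order,
then there is a positive integer `m` such that every finite orbit of `⟨gᵐ⟩` on the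
Cantor set is a singleton: every point with finite `⟨gᵐ⟩`-orbit is fixed by `gᵐ`. -/
theorem exists_power_with_no_nontrivial_finite_orbits (g : Equiv.Perm Cantor)
    (hg : IsPrefixReplacement g) (hord : ¬ IsOfFinOrder g) :
    ∃ m : ℕ, 0 < m ∧ ∀ ξ : Cantor,
      (Set.range fun n : ℤ => ((g ^ m) ^ n) ξ).Finite → (g ^ m) ξ = ξ := by
  obtain ⟨M, c, hc⟩ := exists_cocycle hg
  have hK : ∀ p : List Bool, ∃ k, 0 < k ∧ ((∃ k', Pumpable g p k') → Pumpable g p k) := by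
    intro p
    by_cases h : ∃ k', Pumpable g p k'
    · obtain ⟨k, hk⟩ := h
      exact ⟨k, hk.1, fun _ => hk⟩
    · exact ⟨1, one_pos, fun h' => absurd h' h⟩
  choose K hKpos hKp using hK
  refine ⟨∏ f : Fin M → Bool, K (List.ofFn f), Finset.prod_pos fun f _ => hKpos _, ?_⟩
  intro ξ hfin
  obtain ⟨N₀, hN₀, hξ₀⟩ := exists_period_of_finite hfin
  set m := ∏ f : Fin M → Bool, K (List.ofFn f) with hm
  have hmpos : 0 < m := Finset.prod_pos fun f _ => hKpos _
  rw [← pow_mul] at hξ₀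
  have hN : 0 < m * N₀ := Nat.mul_pos hmpos hN₀
  generalize m * N₀ = N at hξ₀ hN
  obtain ⟨n, hn⟩ := exists_pumpable hc ξ N hN hξ₀
  have hcomm : ∀ a : ℕ, (g ^ a) ((g ^ n) ξ) = (g ^ n) ((g ^ a) ξ) := by
    intro a
    rw [← Equiv.Perm.mul_apply, ← Equiv.Perm.mul_apply, ← pow_add, ← pow_add, add_comm]
  have hk := hKp _ ⟨_, hn⟩
  have hfix := hk.fixed N hN (fun i => (g ^ n) ξ (i + M))
    (by rw [prepend_initSeg, hcomm, hξ₀])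
  rw [prepend_initSeg] at hfix
  obtain ⟨j, hj⟩ : K (initSeg ((g ^ n) ξ) M) ∣ m :=
    Finset.dvd_prod_of_mem (fun f : Fin M → Bool => K (List.ofFn f))
      (Finset.mem_univ fun i : Fin M => (g ^ n) ξ i)
  have := pow_mul_fixed hfix j
  rw [← hj, hcomm] at this
  exact (g ^ n).injective this
end
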